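/- arXiv:1710.10908 — 3 statements merged into one kernel-verified Lean document; each statement's English description precedes it below -/
import Mathlib

section
/- For every prime p, every dense S-ring over G = E_9 × C_p, i.e. every S-ring 𝒜 over G for which both the subgroup A = E_9 × 1 and the subgroup P = 1 × C_p are 𝒜-subgroups, is cyclotomic. -/
open scoped Pointwise

/-- The element `\underline{X} = Σ_{x∈X} x` of the integral group ring `ℤG`. -/
noncomputable def grpSum {G : Type*} [Group G] [Fintype G] (X : Set G) :
    MonoidAlgebra ℤ G :=
  ∑ x : G, X.indicator (fun g => MonoidAlgebra.single g (1 : ℤ)) x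

/-- A Schur ring (S-ring) over a finite group `G`, described by its partition
into basic sets: (S1) `{1}` is a basic set, (S2) the class of basic sets is
closed under inverses, (S3) the ℤ-span of the sums `\underline{X}` is closed
under multiplication (i.e. is a subring of `ℤG`). -/
structure SchurRing (G : Type*) [Group G] [Fintype G] where
  basicSets : Set (Set G)
  nonempty_mem : ∀ X ∈ basicSets, X.Nonempty
  cover : ∀ g : G, ∃ X ∈ basicSets, g ∈ X
  disjoint' : ∀ X ∈ basicSets, ∀ Y ∈ basicSets, X ≠ Y → X ∩ Y = ∅
  one_mem : {(1 : G)} ∈ basicSets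
  inv_mem : ∀ X ∈ basicSets, X⁻¹ ∈ basicSets
  mul_mem : ∀ X ∈ basicSets, ∀ Y ∈ basicSets,
    grpSum X * grpSum Y ∈ Submodule.span ℤ (grpSum '' basicSets)

namespace SchurRing

variable {G : Type*} [Group G] [Fintype G]

/-- An `𝒜`-set: a union of basic sets. -/
def IsASet (A : SchurRing G) (S : Set G) : Prop :=
  ∃ T ⊆ A.basicSets, S = ⋃₀ T

/-- An `𝒜`-subgroup: a subgroup that is an `𝒜`-set. -/
def IsASubgroup (A : SchurRing G) (H : Subgroup G) : Prop :=
  A.IsASet (H : Set G)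

/-- `𝒜` is schurian: its basic sets are the orbits of the stabilizer of `1`
in some group `K` with `G_right ≤ K ≤ Sym(G)`. -/
def IsSchurian (A : SchurRing G) : Prop :=
  ∃ K : Subgroup (Equiv.Perm G), (∀ g : G, Equiv.mulRight g ∈ K) ∧
    A.basicSets = Set.range fun x : G =>
      MulAction.orbit (MulAction.stabilizer K (1 : G)) x

/-- `𝒜` is cyclotomic: its basic sets are the orbits of a subgroup of `Aut(G)`. -/
def IsCyclotomic (A : SchurRing G) : Prop :=
  ∃ M : Subgroup (MulAut G),
    A.basicSets = Set.range fun x : G => MulAction.orbit M x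

/-- `𝒜` is trivial: its basic sets are `{1}` and `G ∖ {1}`. -/
def IsTrivial (A : SchurRing G) : Prop :=
  A.basicSets ⊆ {{(1 : G)}, {(1 : G)}ᶜ}

/-- `𝒜 = 𝒜_H ⊗ 𝒜_K`: an internal tensor product decomposition of `𝒜`
with respect to the internal direct product `G = H × K`. -/
def IsTensorDecomp (A : SchurRing G) (H K : Subgroup G) : Prop :=
  A.IsASubgroup H ∧ A.IsASubgroup K ∧ H ⊓ K = ⊥ ∧ H ⊔ K = ⊤ ∧
  ∀ X ∈ A.basicSets, ∃ X₁ ∈ A.basicSets, ∃ X₂ ∈ A.basicSets,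
    X₁ ⊆ (H : Set G) ∧ X₂ ⊆ (K : Set G) ∧ X = X₁ * X₂

/-- `𝒜` is the `U/L`-wreath product: `U`, `L` are `𝒜`-subgroups, `L ⊴ G`,
`L ≤ U`, and `L ≤ rad(X)` for every basic set `X` outside `U`. -/
def IsWreathSection (A : SchurRing G) (U L : Subgroup G) : Prop :=
  A.IsASubgroup U ∧ A.IsASubgroup L ∧ L ≤ U ∧ L.Normal ∧
  ∀ X ∈ A.basicSets, ¬ X ⊆ (U : Set G) →
    ∀ g ∈ L, (g * ·) '' X = X ∧ (· * g) '' X = X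

end SchurRing

/-- A finite group is a Schur group if every S-ring over it is schurian. -/
def IsSchurGroup (G : Type*) [Group G] [Fintype G] : Prop :=
  ∀ A : SchurRing G, A.IsSchurian

/-- A Cayley isomorphism between S-rings: a group isomorphism mapping the
basic sets of `𝒜` onto the basic sets of `𝒜'`. -/
def IsCayleyIso {G G' : Type*} [Group G] [Fintype G] [Group G'] [Fintype G']
    (A : SchurRing G) (A' : SchurRing G') (f : G ≃* G') : Prop :=
  (fun X : Set G => ⇑f '' X) '' A.basicSets = A'.basicSets

/-- An equivalence relation on an additive abelian group whose classes are the basic sets of a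
Schur ring: functions constant on classes are closed under convolution. -/
structure IsSchurRel {H : Type} [AddCommGroup H] [Fintype H] (r : Setoid H) : Prop where
  zero : ∀ x, r 0 x → x = 0
  neg : ∀ x y, r x y → r (-x) (-y)
  conv : ∀ {k : Type} [CommRing k] (f g : H → k), (∀ x y, r x y → f x = f y) →
    (∀ x y, r x y → g x = g y) → ∀ x y, r x y →
      ∑ t, f t * g (x - t) = ∑ t, f t * g (y - t)

section GroupRing

variable {G : Type*} [Group G] [Fintype G]

omit [Group G] in
lemma coeff_sum_single {k : Type*} [Semiring k] (f : G → k) (x : G) :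
    (∑ t, MonoidAlgebra.single t (f t)).coeff x = f x := by
  classical
  simp [MonoidAlgebra.coeff_sum, MonoidAlgebra.coeff_single, Finsupp.finsetSum_apply,
    Finsupp.single_apply]

lemma grpSum_eq (X : Set G) :
    grpSum X = ∑ t, MonoidAlgebra.single t (X.indicator (fun _ => (1 : ℤ)) t) := by
  classical
  unfold grpSum
  refine Finset.sum_congr rfl fun t _ => ?_
  by_cases h : t ∈ X <;> simp [h]

lemma coeff_sum_single_mul {k : Type*} [Semiring k] (f g : G → k) (x : G) :
    ((∑ t, MonoidAlgebra.single t (f t)) * ∑ t, MonoidAlgebra.single t (g t)).coeff x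
      = ∑ t, f t * g (t⁻¹ * x) := by
  rw [Finset.sum_mul, MonoidAlgebra.coeff_sum, Finsupp.finsetSum_apply]
  refine Finset.sum_congr rfl fun t _ => ?_
  rw [MonoidAlgebra.coeff_single_mul_apply, coeff_sum_single]

namespace SchurRing

variable (A : SchurRing G)

/-- Two elements are related when they lie in a common basic set. -/
def basicRel (x y : G) : Prop := ∃ X ∈ A.basicSets, x ∈ X ∧ y ∈ X

variable {A}

lemma eq_of_mem {X Y : Set G} (hX : X ∈ A.basicSets) (hY : Y ∈ A.basicSets) {x : G}
    (hx : x ∈ X) (hy : x ∈ Y) : X = Y := by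
  by_contra h
  have := A.disjoint' X hX Y hY h
  exact (Set.mem_empty_iff_false x).1 (this ▸ ⟨hx, hy⟩)

lemma basicRel_mem_iff {X : Set G} (hX : X ∈ A.basicSets) {x y : G} (h : A.basicRel x y) :
    x ∈ X ↔ y ∈ X := by
  obtain ⟨Y, hY, hx, hy⟩ := h
  exact ⟨fun h' => eq_of_mem hX hY h' hx ▸ hy, fun h' => eq_of_mem hX hY h' hy ▸ hx⟩

lemma IsASet.mem_iff {S : Set G} (hS : A.IsASet S) {x y : G} (h : A.basicRel x y) :
    x ∈ S ↔ y ∈ S := by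
  obtain ⟨T, hT, rfl⟩ := hS
  simp only [Set.mem_sUnion]
  exact exists_congr fun X => and_congr_right fun hX => basicRel_mem_iff (hT hX) h

lemma basicRel_refl (x : G) : A.basicRel x x := by
  obtain ⟨X, hX, hx⟩ := A.cover x
  exact ⟨X, hX, hx, hx⟩

lemma basicRel_symm {x y : G} (h : A.basicRel x y) : A.basicRel y x := by
  obtain ⟨X, hX, hx, hy⟩ := h
  exact ⟨X, hX, hy, hx⟩

lemma basicRel_trans {x y z : G} (h : A.basicRel x y) (h' : A.basicRel y z) :
    A.basicRel x z := by
  obtain ⟨X, hX, hx, hy⟩ := h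
  exact ⟨X, hX, hx, (basicRel_mem_iff hX h').1 hy⟩

lemma coeff_eq_of_mem_span {v : MonoidAlgebra ℤ G}
    (hv : v ∈ Submodule.span ℤ (grpSum '' A.basicSets)) {x y : G} (h : A.basicRel x y) :
    v.coeff x = v.coeff y := by
  induction hv using Submodule.span_induction with
  | mem v hv =>
    obtain ⟨X, hX, rfl⟩ := hv
    rw [grpSum_eq, coeff_sum_single, coeff_sum_single]
    by_cases hx : x ∈ X
    · simp [hx, (basicRel_mem_iff hX h).1 hx]
    · simp [hx, mt (basicRel_mem_iff hX h).2 hx]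
  | zero => rfl
  | add v w _ _ hv hw => simp [hv, hw]
  | smul c v _ hv => simp only [MonoidAlgebra.coeff_smul, Finsupp.smul_apply, hv]

lemma conv_indicator {X Y : Set G} (hX : X ∈ A.basicSets) (hY : Y ∈ A.basicSets) {x y : G}
    (h : A.basicRel x y) (k : Type*) [CommRing k] :
    ∑ t, X.indicator (fun _ => (1 : k)) t * Y.indicator (fun _ => 1) (t⁻¹ * x)
      = ∑ t, X.indicator (fun _ => (1 : k)) t * Y.indicator (fun _ => 1) (t⁻¹ * y) := by
  classical
  have := coeff_eq_of_mem_span (A.mul_mem X hX Y hY) h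
  rw [grpSum_eq, grpSum_eq, coeff_sum_single_mul, coeff_sum_single_mul] at this
  have := congrArg (Int.cast : ℤ → k) this
  simpa [Set.indicator_apply] using this

lemma exists_eq_sum_indicator [Fintype A.basicSets] {k : Type*} [CommRing k] (f : G → k)
    (hf : ∀ x y, A.basicRel x y → f x = f y) :
    ∃ F : A.basicSets → k, ∀ t, f t = ∑ X, F X * X.1.indicator (fun _ => 1) t := by
  classical
  choose rep hrep using A.nonempty_mem
  refine ⟨fun X => f (rep X.1 X.2), fun t => ?_⟩
  obtain ⟨X, hX, ht⟩ := A.cover t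
  rw [Finset.sum_eq_single ⟨X, hX⟩]
  · simp [ht, hf _ _ ⟨X, hX, ht, hrep X hX⟩]
  · intro Y _ hY
    have : t ∉ Y.1 := fun h => hY (Subtype.ext (eq_of_mem Y.2 hX h ht))
    simp [this]
  · simp

lemma conv_eq {k : Type*} [CommRing k] (f g : G → k)
    (hf : ∀ x y, A.basicRel x y → f x = f y) (hg : ∀ x y, A.basicRel x y → g x = g y)
    {x y : G} (h : A.basicRel x y) :
    ∑ t, f t * g (t⁻¹ * x) = ∑ t, f t * g (t⁻¹ * y) := by
  classical
  have := Fintype.ofFinite A.basicSets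
  obtain ⟨F, hF⟩ := exists_eq_sum_indicator f hf
  obtain ⟨K, hK⟩ := exists_eq_sum_indicator g hg
  have key : ∀ v, ∑ t, f t * g (t⁻¹ * v) = ∑ X, ∑ Y, F X * K Y *
      ∑ t, X.1.indicator (fun _ => (1 : k)) t * Y.1.indicator (fun _ => 1) (t⁻¹ * v) := by
    intro v
    simp_rw [hF, hK, Finset.sum_mul_sum, Finset.mul_sum]
    rw [Finset.sum_comm]
    refine Finset.sum_congr rfl fun X _ => ?_
    rw [Finset.sum_comm]
    refine Finset.sum_congr rfl fun Y _ => Finset.sum_congr rfl fun t _ => ?_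
    ring
  rw [key, key]
  refine Finset.sum_congr rfl fun X _ => Finset.sum_congr rfl fun Y _ => ?_
  rw [conv_indicator X.2 Y.2 h k]

/-- The relation of lying in a common basic set, in additive coordinates. -/
def addSetoid {H : Type} [AddCommGroup H] (A : SchurRing G) (e : Multiplicative H ≃* G) :
    Setoid H where
  r x y := A.basicRel (e (.ofAdd x)) (e (.ofAdd y))
  iseqv := ⟨fun _ => basicRel_refl _, basicRel_symm, basicRel_trans⟩

lemma isSchurRel_addSetoid {H : Type} [AddCommGroup H] [Fintype H] (A : SchurRing G)
    (e : Multiplicative H ≃* G) : IsSchurRel (A.addSetoid e) where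
  zero x h := by
    have h' : A.basicRel (e (.ofAdd 0)) (e (.ofAdd x)) := h
    have := (basicRel_mem_iff A.one_mem h').1 (by simp)
    simpa using this
  neg x y h := by
    obtain ⟨X, hX, hx, hy⟩ := h
    exact ⟨X⁻¹, A.inv_mem X hX, by simpa using hx, by simpa using hy⟩
  conv {k} _ f g hf hg x y h := by
    have key := conv_eq (A := A) (fun t => f (e.symm t).toAdd) (fun t => g (e.symm t).toAdd)
      (fun x y hxy => hf _ _ (by change A.basicRel _ _; simpa using hxy))
      (fun x y hxy => hg _ _ (by change A.basicRel _ _; simpa using hxy)) h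
    have tr : ∀ v : H, ∑ t, f t * g (v - t) = ∑ t : G, f (e.symm t).toAdd *
        g (e.symm (t⁻¹ * e (.ofAdd v))).toAdd := by
      intro v
      refine Fintype.sum_equiv (Multiplicative.ofAdd.trans e.toEquiv) _ _ fun t => ?_
      simp [sub_eq_neg_add]
    rw [tr, tr]
    exact key

end SchurRing

end GroupRing

namespace IsSchurRel

section Multiplier

variable {H : Type} [AddCommGroup H] [Fintype H] {r : Setoid H}

lemma card_conv_eq (hr : IsSchurRel r) (S T : H → Prop) [DecidablePred S] [DecidablePred T]
    (hS : ∀ x y, r x y → (S x ↔ S y)) (hT : ∀ x y, r x y → (T x ↔ T y)) {x y : H}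
    (h : r x y) :
    (Finset.univ.filter fun t => S t ∧ T (x - t)).card
      = (Finset.univ.filter fun t => S t ∧ T (y - t)).card := by
  have := hr.conv (k := ℤ) (fun t => if S t then 1 else 0) (fun t => if T t then 1 else 0)
    (fun x y h => by simp [hS x y h]) (fun x y h => by simp [hT x y h]) x y h
  have tr : ∀ v, ((Finset.univ.filter fun t => S t ∧ T (v - t)).card : ℤ)
      = ∑ t, (if S t then 1 else 0) * (if T (v - t) then 1 else 0) := by
    intro v
    rw [Finset.card_filter]
    push_cast
    refine Finset.sum_congr rfl fun t _ => ?_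
    by_cases h₁ : S t <;> simp [h₁]
  exact_mod_cast (tr x).trans (this.trans (tr y).symm)

lemma exists_conv (hr : IsSchurRel r) (S T : H → Prop)
    (hS : ∀ x y, r x y → (S x ↔ S y)) (hT : ∀ x y, r x y → (T x ↔ T y)) {x y : H}
    (h : r x y) (hx : ∃ t, S t ∧ T (x - t)) : ∃ t, S t ∧ T (y - t) := by
  classical
  have key := hr.card_conv_eq S T hS hT h
  obtain ⟨t, ht⟩ := hx
  have : 0 < (Finset.univ.filter fun t => S t ∧ T (x - t)).card :=
    Finset.card_pos.2 ⟨t, by simpa using ht⟩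
  rw [key] at this
  obtain ⟨s, hs⟩ := Finset.card_pos.1 this
  exact ⟨s, by simpa using hs⟩

omit [AddCommGroup H] [Fintype H] in
lemma class_congr {x y : H} (s : H) (h : r x y) : r s x ↔ r s y :=
  ⟨fun h' => r.trans h' h, fun h' => r.trans h' (r.symm h)⟩

lemma coeff_mul_eq (hr : IsSchurRel r) {k : Type} [CommRing k]
    (F K : MonoidAlgebra k (Multiplicative H))
    (hF : ∀ x y, r x y → F.coeff (.ofAdd x) = F.coeff (.ofAdd y))
    (hK : ∀ x y, r x y → K.coeff (.ofAdd x) = K.coeff (.ofAdd y)) {x y : H} (h : r x y) :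
    (F * K).coeff (.ofAdd x) = (F * K).coeff (.ofAdd y) := by
  have expand : ∀ L : MonoidAlgebra k (Multiplicative H),
      L = ∑ t, MonoidAlgebra.single t (L.coeff t) := fun L => by
    ext x
    rw [coeff_sum_single]
  rw [expand F, expand K, coeff_sum_single_mul, coeff_sum_single_mul]
  have tr : ∀ v : H, ∑ t, F.coeff t * K.coeff (t⁻¹ * .ofAdd v)
      = ∑ t : H, F.coeff (.ofAdd t) * K.coeff (.ofAdd (v - t)) := fun v =>
    Fintype.sum_equiv Multiplicative.toAdd _ _ fun t => by
      simp [sub_eq_neg_add, ofAdd_add]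
  rw [tr, tr]
  exact hr.conv _ _ hF hK x y h

/-- Schur's theorem on multipliers, for a prime multiplier. -/
lemma of_nsmul_prime (hr : IsSchurRel r) {q : ℕ} (hq : q.Prime)
    (hcop : q.Coprime (Nat.card H)) {x y : H} (h : r (q • x) (q • y)) : r x y := by
  classical
  have := Fact.mk hq
  have hinj : Function.Injective fun t : Multiplicative H => t ^ q :=
    (powCoprime (G := Multiplicative H) (n := q) hcop.symm).injective
  set F : MonoidAlgebra (ZMod q) (Multiplicative H) :=
    ∑ t : Multiplicative H, MonoidAlgebra.single t (if r x t.toAdd then (1 : ZMod q) else 0)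
    with hF
  have hcharP : CharP (MonoidAlgebra (ZMod q) (Multiplicative H)) q :=
    charP_of_injective_algebraMap (algebraMap (ZMod q) _).injective q
  have hpow : ∀ n, ∀ x y, r x y → (F ^ n).coeff (.ofAdd x) = (F ^ n).coeff (.ofAdd y) := by
    intro n
    induction n with
    | zero =>
      intro a b hab
      have : a = 0 ↔ b = 0 :=
        ⟨fun h' => hr.zero _ (h' ▸ hab), fun h' => hr.zero _ (h' ▸ r.symm hab)⟩
      have h1 : Multiplicative.ofAdd a = 1 ↔ Multiplicative.ofAdd b = 1 := by simpa using this
      simp only [pow_zero, MonoidAlgebra.one_def, MonoidAlgebra.coeff_single,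
        Finsupp.single_apply, eq_comm (a := (1 : Multiplicative H)), h1]
    | succ n ih =>
      intro a b hab
      rw [pow_succ]
      refine hr.coeff_mul_eq _ _ ih (fun a b hab => ?_) hab
      rw [hF, coeff_sum_single, coeff_sum_single]
      simp [class_congr x hab]
  have hcoeff : ∀ v : H, (F ^ q).coeff (.ofAdd (q • v)) = if r x v then 1 else 0 := by
    intro v
    rw [hF, sum_pow_char]
    simp only [MonoidAlgebra.single_pow, MonoidAlgebra.coeff_sum, Finsupp.finsetSum_apply,
      MonoidAlgebra.coeff_single, Finsupp.single_apply]
    rw [Finset.sum_eq_single (Multiplicative.ofAdd v)]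
    · simp [hq.ne_zero]
    · intro t _ ht
      rw [if_neg]
      intro h'
      exact ht (hinj (by simpa using h'))
    · simp
  have := hpow q _ _ h
  rw [hcoeff, hcoeff, if_pos (r.refl x)] at this
  by_contra hne
  rw [if_neg hne] at this
  exact one_ne_zero this

end Multiplier

end IsSchurRel

/-- A Schur relation on `V × ZMod p` for which both factors are unions of classes. -/
structure IsDenseRel {V : Type} [AddCommGroup V] [Fintype V] {p : ℕ} [NeZero p]
    (r : Setoid (V × ZMod p)) : Prop extends IsSchurRel r where
  left : ∀ x y, r x y → x.2 = 0 → y.2 = 0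
  right : ∀ x y, r x y → x.1 = 0 → y.1 = 0

namespace IsDenseRel

variable {V : Type} [AddCommGroup V] [Fintype V] {p : ℕ}

section Projections

variable [NeZero p] {r : Setoid (V × ZMod p)}

lemma left_iff (hr : IsDenseRel r) (x y : V × ZMod p) (h : r x y) : x.2 = 0 ↔ y.2 = 0 :=
  ⟨hr.left _ _ h, hr.left _ _ (r.symm h)⟩

lemma right_iff (hr : IsDenseRel r) (x y : V × ZMod p) (h : r x y) : x.1 = 0 ↔ y.1 = 0 :=
  ⟨hr.right _ _ h, hr.right _ _ (r.symm h)⟩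

lemma proj_left (hr : IsDenseRel r) {a b : V} {z w : ZMod p} (h : r (a, z) (b, w)) :
    r (a, 0) (b, 0) := by
  obtain ⟨t, ht, ht'⟩ := hr.exists_conv (fun t => t.1 = 0) (r (a, 0)) hr.right_iff
    (fun _ _ => IsSchurRel.class_congr _) h ⟨(0, z), rfl, by simp⟩
  have h0 := hr.left _ _ ht' rfl
  have : (b, w) - t = (b, 0) := Prod.ext (by simp [ht]) h0
  rwa [this] at ht'

lemma proj_right (hr : IsDenseRel r) {a b : V} {z w : ZMod p} (h : r (a, z) (b, w)) :
    r (0, z) (0, w) := by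
  obtain ⟨t, ht, ht'⟩ := hr.exists_conv (fun t => t.2 = 0) (r (0, z)) hr.left_iff
    (fun _ _ => IsSchurRel.class_congr _) h ⟨(a, 0), rfl, by simp⟩
  have h0 := hr.right _ _ ht' rfl
  have : (b, w) - t = (0, w) := Prod.ext h0 (by simp [ht])
  rwa [this] at ht'

lemma exists_of_left (hr : IsDenseRel r) {a b : V} (h : r (a, 0) (b, 0)) (z : ZMod p) :
    ∃ w, r (a, z) (b, w) := by
  obtain ⟨t, ht, ht'⟩ := hr.exists_conv (r (a, z)) (fun t => t.1 = 0)
    (fun _ _ => IsSchurRel.class_congr _) hr.right_iff h ⟨(a, z), r.refl _, by simp⟩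
  have : t = (b, t.2) := Prod.ext (sub_eq_zero.1 ht').symm rfl
  exact ⟨t.2, this ▸ ht⟩

lemma exists_of_right (hr : IsDenseRel r) {z w : ZMod p} (h : r (0, z) (0, w)) (a : V) :
    ∃ b, r (a, z) (b, w) := by
  obtain ⟨t, ht, ht'⟩ := hr.exists_conv (r (a, z)) (fun t => t.2 = 0)
    (fun _ _ => IsSchurRel.class_congr _) hr.left_iff h ⟨(a, z), r.refl _, by simp⟩
  have : t = (t.1, w) := Prod.ext rfl (sub_eq_zero.1 ht').symm
  exact ⟨t.1, this ▸ ht⟩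

/-- Over `V × ZMod 3` the map `id × neg` permutes the classes. -/
lemma neg_right_of_three {r : Setoid (V × ZMod 3)} (hr : IsDenseRel r) {a b : V} {z w : ZMod 3}
    (h : r (a, z) (b, w)) : r (a, -z) (b, -w) := by
  classical
  by_cases hz : z = 0
  · subst hz
    have := hr.left _ _ h rfl
    simp only at this
    subst this
    simpa using h
  have hw : w ≠ 0 := fun hw => hz (hr.left _ _ (r.symm h) hw)
  obtain ⟨w', hw'⟩ := hr.exists_of_left (hr.proj_left h) (-z)
  have hw'0 : w' ≠ 0 := fun h0 => hz (neg_eq_zero.1 (hr.left _ _ (r.symm hw') h0))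
  have dich : ∀ u v : ZMod 3, u ≠ 0 → v ≠ 0 → u = v ∨ u = -v := by decide
  rcases dich w' w hw'0 hw with rfl | rfl
  swap
  · exact hw'
  have hzz : r (a, z) (a, -z) := r.trans h (r.symm hw')
  have key := hr.card_conv_eq (r (a, z)) (fun t => t.1 = 0)
    (fun _ _ => IsSchurRel.class_congr _) hr.right_iff (hr.proj_left h)
  have hne : z ≠ -z := (by decide : ∀ z : ZMod 3, z ≠ 0 → z ≠ -z) z hz
  have h1 : 1 < (Finset.univ.filter fun t => r (a, z) t ∧ ((a, (0 : ZMod 3)) - t).1 = 0).card :=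
    Finset.one_lt_card.2 ⟨(a, z), by simp, (a, -z), by simpa using hzz,
      by simpa using hne⟩
  rw [key] at h1
  obtain ⟨t, ht, hne'⟩ := Finset.exists_mem_ne h1 (b, w')
  simp only [Finset.mem_filter, Finset.mem_univ, true_and, Prod.fst_sub, sub_eq_zero] at ht
  obtain ⟨t₁, t₂⟩ := t
  obtain ⟨ht, rfl⟩ := ht
  have ht0 : t₂ ≠ 0 := fun h0 => hz (hr.left _ _ (r.symm ht) h0)
  rcases dich t₂ w' ht0 hw with rfl | rfl
  · exact absurd rfl hne'
  · exact r.trans (r.symm hzz) ht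

end Projections

section Multipliers

lemma zmod_three_eq : ∀ v : ZMod 3, v ≠ 0 → v = 1 ∨ v = -1 := by decide

variable [Fact p.Prime] {r : Setoid (V × ZMod p)}

lemma mul_right [Module (ZMod 3) V] (hr : IsDenseRel r) (hV : Nat.card V = 9) {a b : V}
    {z w : ZMod p}
    (h : r (a, z) (b, w)) (u : (ZMod p)ˣ) : r (a, u * z) (b, u * w) := by
  by_cases hp3 : p = 3
  · subst hp3
    rcases zmod_three_eq u u.ne_zero with hu | hu
    · simpa [hu] using h
    · simpa [hu] using hr.neg_right_of_three h
  have hp : p.Prime := Fact.out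
  have hcop : Nat.Coprime 3 p := (Nat.coprime_primes Nat.prime_three hp).2 (Ne.symm hp3)
  let e := ZMod.chineseRemainder hcop
  let v : (ZMod (3 * p))ˣ :=
    Units.map (e.symm : ZMod 3 × ZMod p →* ZMod (3 * p)) (MulEquiv.prodUnits.symm (1, u⁻¹))
  have : NeZero (3 * p) := ⟨Nat.mul_ne_zero (by norm_num) hp.ne_zero⟩
  obtain ⟨q, hqgt, hq, hqv⟩ := Nat.forall_exists_prime_gt_and_eq_mod v.isUnit (3 * p)
  have hev : e (q : ZMod (3 * p)) = (1, ((u⁻¹ : (ZMod p)ˣ) : ZMod p)) := by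
    rw [hqv]
    exact e.apply_symm_apply _
  rw [map_natCast] at hev
  have h3 : (q : ZMod 3) = 1 := congrArg Prod.fst hev
  have hqp : (q : ZMod p) = (u⁻¹ : (ZMod p)ˣ) := congrArg Prod.snd hev
  have hV' : ∀ x : V, q • x = x := fun x => by
    rw [← Nat.cast_smul_eq_nsmul (ZMod 3), h3, one_smul]
  have hcard : q.Coprime (Nat.card (V × ZMod p)) := by
    rw [Nat.card_prod, hV, Nat.card_zmod]
    refine Nat.Coprime.mul_right ?_ ?_
    · exact Nat.Coprime.pow_right 2
        ((Nat.coprime_primes hq Nat.prime_three).2 (by have := hp.pos; omega))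
    · exact (Nat.coprime_primes hq hp).2 (by have := hp.pos; omega)
  have hmul : ∀ x : V, ∀ y : ZMod p, q • (x, u * y) = (x, y) := fun x y => by
    ext
    · exact hV' x
    · change q • (u * y) = y
      rw [nsmul_eq_mul, hqp, Units.inv_mul_cancel_left]
  refine hr.of_nsmul_prime hq hcard ?_
  rwa [hmul, hmul]

end Multipliers

end IsDenseRel

namespace IsDenseRel

section Evaluation

variable {V : Type} [AddCommGroup V] [Fintype V] {p : ℕ} [Fact p.Prime]
  {r : Setoid (V × ZMod p)}

/-- Evaluation of the second coordinate at the additive character `z ↦ e(t⁻¹ z)`. -/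
noncomputable def charEval (t : (ZMod p)ˣ) (f : V × ZMod p → ℂ) (a : V) : ℂ :=
  ∑ z, ZMod.stdAddChar (N := p) ((↑t⁻¹ : ZMod p) * z) * f (a, z)

lemma charEval_conv (t : (ZMod p)ˣ) (f g : V × ZMod p → ℂ) (a : V) :
    ∑ x, charEval t f x * charEval t g (a - x)
      = charEval t (fun y => ∑ s, f s * g (y - s)) a := by
  simp only [charEval, Fintype.sum_prod_type, Finset.mul_sum]
  conv_rhs => rw [Finset.sum_comm]
  refine Finset.sum_congr rfl fun x _ => ?_
  conv_rhs => rw [Finset.sum_comm]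
  rw [← Finset.mul_sum, Finset.sum_mul_sum]
  refine Finset.sum_congr rfl fun z _ => ?_
  rw [← Equiv.sum_comp (Equiv.subRight z)]
  refine Finset.sum_congr rfl fun v _ => ?_
  have : (↑t⁻¹ : ZMod p) * v
      = (↑t⁻¹ : ZMod p) * z + (↑t⁻¹ : ZMod p) * (v - z) := by ring
  rw [this, AddChar.map_add_eq_mul]
  simp only [Equiv.subRight_apply, Prod.mk_sub_mk]
  ring

lemma charEval_eq [Module (ZMod 3) V] (hr : IsDenseRel r) (hV : Nat.card V = 9)
    {K : V × ZMod p → ℂ} (hK : ∀ x y, r x y → K x = K y) {a b : V} {u : (ZMod p)ˣ}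
    (h : r (a, 1) (b, u)) : charEval 1 K a = charEval u K b := by
  unfold charEval
  refine Fintype.sum_equiv u.mulLeft _ _ fun z => ?_
  rw [Units.mulLeft_apply, Units.inv_mul_cancel_left]
  simp only [inv_one, Units.val_one, one_mul]
  congr 1
  apply hK
  rcases eq_or_ne z 0 with rfl | hz
  · simpa using hr.proj_left h
  · simpa [mul_comm] using hr.mul_right hV h (Units.mk0 z hz)

/-- The pullback of `g` along `id × w⁻¹`, or its pushforward to `V × 0` when `w = 0`. -/
noncomputable def dilate (g : V × ZMod p → ℂ) (w : ZMod p) (x : V × ZMod p) : ℂ :=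
  if w = 0 then (if x.2 = 0 then ∑ v, g (x.1, v) else 0) else g (x.1, w⁻¹ * x.2)

lemma dilate_eq [Module (ZMod 3) V] (hr : IsDenseRel r) (hV : Nat.card V = 9)
    {g : V × ZMod p → ℂ} (hg : ∀ x y, r x y → g x = g y) (w : ZMod p) {x y : V × ZMod p}
    (h : r x y) : dilate g w x = dilate g w y := by
  classical
  unfold dilate
  rcases eq_or_ne w 0 with rfl | hw
  · simp only [if_true, hr.left_iff x y h]
    congr 1
    have key := hr.conv g (fun t => if t.1 = 0 then 1 else 0) hg
      (fun x y h => by simp [hr.right_iff x y h]) _ _ (hr.proj_left h)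
    simp only [Prod.fst_sub, sub_eq_zero, mul_ite, mul_one, mul_zero,
      Fintype.sum_prod_type_right, Finset.sum_ite_eq, Finset.mem_univ, if_true] at key
    exact key
  · simp only [hw, if_false]
    apply hg
    simpa using hr.mul_right hV h (Units.mk0 w hw)⁻¹

omit [AddCommGroup V] [Fintype V] in
lemma charEval_dilate (t : (ZMod p)ˣ) (g : V × ZMod p → ℂ) (w : ZMod p) (a : V) :
    charEval t (dilate g w) a
      = ∑ z, ZMod.stdAddChar (N := p) ((↑t⁻¹ : ZMod p) * (w * z)) * g (a, z) := by
  unfold charEval dilate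
  rcases eq_or_ne w 0 with rfl | hw
  · simp only [if_true, mul_ite, mul_zero, Finset.sum_ite_eq', Finset.mem_univ, zero_mul,
      AddChar.map_zero_eq_one, one_mul]
  · simp only [hw, if_false]
    refine (Fintype.sum_equiv (Units.mk0 w hw).mulLeft _ _ fun z => ?_).symm
    simp only [Units.mulLeft_apply, Units.val_mk0, inv_mul_cancel_left₀ hw]

/-- A function whose evaluation at every character `e(t⁻¹ ·)` is the fibre of `g` over `t`. -/
noncomputable def fibreLift (g : V × ZMod p → ℂ) (x : V × ZMod p) : ℂ :=
  (p : ℂ)⁻¹ * ∑ w, ZMod.stdAddChar (N := p) (-w) * dilate g w x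

omit [AddCommGroup V] [Fintype V] in
lemma charEval_fibreLift (t : (ZMod p)ˣ) (g : V × ZMod p → ℂ) (a : V) :
    charEval t (fibreLift g) a = g (a, t) := by
  classical
  have hp : (p : ℂ) ≠ 0 := Nat.cast_ne_zero.2 (Fact.out : p.Prime).ne_zero
  have h1 : charEval t (fibreLift g) a
      = (p : ℂ)⁻¹ * ∑ w, ZMod.stdAddChar (N := p) (-w) * charEval t (dilate g w) a := by
    simp only [charEval, fibreLift, Finset.mul_sum]
    rw [Finset.sum_comm]
    refine Finset.sum_congr rfl fun w _ => Finset.sum_congr rfl fun z _ => ?_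
    ring
  have h2 : ∀ z : ZMod p, ∑ w : ZMod p, ZMod.stdAddChar (N := p) (-w) *
      (ZMod.stdAddChar (N := p) ((↑t⁻¹ : ZMod p) * (w * z)) * g (a, z))
        = if z = t then p * g (a, z) else 0 := by
    intro z
    have hsum := AddChar.sum_mulShift ((↑t⁻¹ : ZMod p) * z - 1) (ZMod.isPrimitive_stdAddChar p)
    rw [ZMod.card] at hsum
    have hz : (↑t⁻¹ : ZMod p) * z - 1 = 0 ↔ z = t := by
      rw [sub_eq_zero, Units.inv_mul_eq_iff_eq_mul, mul_one]
    simp only [hz] at hsum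
    have h3 : ∀ w : ZMod p, ZMod.stdAddChar (N := p) (-w) *
        (ZMod.stdAddChar (N := p) ((↑t⁻¹ : ZMod p) * (w * z)) * g (a, z))
          = ZMod.stdAddChar (w * ((↑t⁻¹ : ZMod p) * z - 1)) * g (a, z) := by
      intro w
      rw [← mul_assoc, ← AddChar.map_add_eq_mul]
      congr 2
      ring
    simp only [h3, ← Finset.sum_mul, hsum]
    split_ifs <;> simp
  rw [h1]
  simp only [charEval_dilate]
  conv_lhs => enter [2]; simp only [Finset.mul_sum]; rw [Finset.sum_comm]
  simp only [h2, Finset.sum_ite_eq', Finset.mem_univ, if_true]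
  rw [inv_mul_cancel_left₀ hp]

lemma fibreLift_eq [Module (ZMod 3) V] (hr : IsDenseRel r) (hV : Nat.card V = 9)
    {g : V × ZMod p → ℂ} (hg : ∀ x y, r x y → g x = g y) (x y : V × ZMod p)
    (h : r x y) : fibreLift g x = fibreLift g y := by
  unfold fibreLift
  simp only [hr.dilate_eq hV hg _ h]

/-- Correspondence of the fibres over `1` and `u` preserves structure constants. -/
lemma sum_fibre_eq [Module (ZMod 3) V] (hr : IsDenseRel r) (hV : Nat.card V = 9)
    {g h : V × ZMod p → ℂ} (hg : ∀ x y, r x y → g x = g y) (hh : ∀ x y, r x y → h x = h y)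
    {a b : V} {u : (ZMod p)ˣ} (hab : r (a, 1) (b, u)) :
    ∑ x, g (x, 1) * h (a - x, 1) = ∑ x, g (x, (u : ZMod p)) * h (b - x, (u : ZMod p)) := by
  have h1 := charEval_conv 1 (fibreLift g) (fibreLift h) a
  have h2 := charEval_conv u (fibreLift g) (fibreLift h) b
  simp only [charEval_fibreLift, Units.val_one] at h1 h2
  rw [h1, h2]
  exact hr.charEval_eq hV
    (hr.conv _ _ (hr.fibreLift_eq hV hg) (hr.fibreLift_eq hV hh)) hab

end Evaluation

end IsDenseRel

/-- The elementary abelian group of order 9, written additively. -/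
abbrev E9 : Type := ZMod 3 × ZMod 3

namespace E9

/-- The determinant of two vectors of the plane over `ZMod 3`. -/
def det (s a : E9) : ZMod 3 := s.1 * a.2 - s.2 * a.1

/-- The linear map with columns `s` and `a`. -/
def comb (s a : E9) : E9 →+ E9 where
  toFun x := (x.1 * s.1 + x.2 * a.1, x.1 * s.2 + x.2 * a.2)
  map_zero' := by simp
  map_add' x y := by ext <;> simp <;> ring

lemma comb_injective : ∀ s a : E9, det s a ≠ 0 → ∀ x, comb s a x = 0 → x = 0 := by
  decide +kernel

/-- The linear automorphism with independent columns `s` and `a`. -/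
noncomputable def combEquiv {s a : E9} (h : det s a ≠ 0) : E9 ≃+ E9 :=
  AddEquiv.ofBijective (comb s a)
    (Finite.injective_iff_bijective.1 ((injective_iff_map_eq_zero _).2 (comb_injective s a h)))

lemma exists_addEquiv {s a s' a' : E9} (h : det s a ≠ 0) (h' : det s' a' ≠ 0) :
    ∃ f : E9 ≃+ E9, ∀ x, f (comb s a x) = comb s' a' x :=
  ⟨(combEquiv h).symm.trans (combEquiv h'), fun x => by
    have : comb s a x = combEquiv h x := rfl
    rw [this, AddEquiv.trans_apply, AddEquiv.symm_apply_apply]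
    rfl⟩

lemma exists_comb {s a : E9} (h : det s a ≠ 0) (y : E9) : ∃ x, comb s a x = y :=
  (combEquiv h).surjective y

lemma comb_eq (s a : E9) (i j : ZMod 3) : comb s a (i, j) = i • s + j • a := rfl

lemma comb_zero_one (s a : E9) : comb s a (0, 1) = a := by simp [comb_eq]

lemma comb_one_zero (s a : E9) : comb s a (1, 0) = s := by simp [comb_eq]

/-- Representatives of the four lines. -/
def lineRep : Fin 4 → E9 := ![(1, 0), (0, 1), (1, 1), (1, 2)]

lemma exists_lineRep : ∀ x : E9, x ≠ 0 → ∃ t, x = lineRep t ∨ x = -lineRep t := by decide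

lemma exists_addEquiv_lineRep (σ : Equiv.Perm (Fin 4)) :
    ∃ f : E9 ≃+ E9, ∀ t, f (lineRep t) = lineRep (σ t) ∨ f (lineRep t) = -lineRep (σ t) := by
  have key : ∀ σ : Equiv.Perm (Fin 4), ∃ ε : ℤˣ,
      det (lineRep (σ 0)) ((ε : ℤ) • lineRep (σ 1)) ≠ 0 ∧
        ∀ t, comb (lineRep (σ 0)) ((ε : ℤ) • lineRep (σ 1)) (lineRep t) = lineRep (σ t) ∨
          comb (lineRep (σ 0)) ((ε : ℤ) • lineRep (σ 1)) (lineRep t) = -lineRep (σ t) := by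
    decide +kernel
  obtain ⟨ε, h, hε⟩ := key σ
  exact ⟨combEquiv h, hε⟩

/-- Number of ways to write `y` as a sum of two elements of `X`. -/
def sumCount (X : Finset E9) (y : E9) : ℕ := (X.filter fun t => y - t ∈ X).card

/-- Number of ways to write `y` as a difference of two elements of `X`. -/
def diffCount (X : Finset E9) (y : E9) : ℕ := (X.filter fun t => t - y ∈ X).card

/-- Sums and differences of elements of `X` are evenly distributed over `X` and `-X`. -/
def IsEven (X : Finset E9) : Prop :=
  ∀ y ∈ X, ∀ z ∈ X, diffCount X y = diffCount X z ∧ sumCount X y = sumCount X z ∧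
    sumCount X (-y) = sumCount X (-z)

instance : DecidablePred IsEven := fun X =>
  inferInstanceAs (Decidable (∀ y ∈ X, ∀ z ∈ X, _ ∧ _ ∧ _))

/-- An antisymmetric set whose sums and differences are evenly distributed over it either
singles out a nonzero element, or contains a coset of a line. -/
lemma antisymm_cases : ∀ X : Finset E9, (X.Nonempty ∧ ∀ y ∈ X, -y ∉ X) → IsEven X →
    (∃ s, s ≠ 0 ∧ ∀ y, sumCount X y = sumCount X s → y = s) ∨
      ∃ d, ∀ e ∈ X, det d e ≠ 0 ∧ ∀ i : ZMod 3, e + i • d ∈ X := by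
  decide +kernel

end E9

open E9

/-- Two colorings of `E9` whose color classes form S-rings with equal structure constants. -/
structure ColorIso {ι : Type} (c c' : E9 → ι) : Prop where
  zero_iff : ∀ a b, c a = c' b → (a = 0 ↔ b = 0)
  neg : ∀ a b, c a = c' b → c (-a) = c' (-b)
  surj : ∀ a, ∃ b, c a = c' b
  surj' : ∀ b, ∃ a, c a = c' b
  conv : ∀ (g h : ι → ℂ) (a b : E9), c a = c' b →
    ∑ x, g (c x) * h (c (a - x)) = ∑ x, g (c' x) * h (c' (b - x))

namespace ColorIso

variable {ι : Type} {c c' : E9 → ι}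

lemma symm (H : ColorIso c c') : ColorIso c' c where
  zero_iff a b h := (H.zero_iff b a h.symm).symm
  neg a b h := (H.neg b a h.symm).symm
  surj a := (H.surj' a).imp fun _ h => h.symm
  surj' a := (H.surj a).imp fun _ h => h.symm
  conv g h a b hab := (H.conv g h b a hab.symm).symm

lemma trans {c'' : E9 → ι} (H : ColorIso c c') (H' : ColorIso c' c'') : ColorIso c c'' where
  zero_iff a b h := by
    obtain ⟨x, hx⟩ := H.surj a
    exact (H.zero_iff a x hx).trans (H'.zero_iff x b (hx.symm.trans h))
  neg a b h := by
    obtain ⟨x, hx⟩ := H.surj a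
    exact (H.neg a x hx).trans (H'.neg x b (hx.symm.trans h))
  surj a := by
    obtain ⟨x, hx⟩ := H.surj a
    obtain ⟨y, hy⟩ := H'.surj x
    exact ⟨y, hx.trans hy⟩
  surj' b := by
    obtain ⟨x, hx⟩ := H'.surj' b
    obtain ⟨y, hy⟩ := H.surj' x
    exact ⟨y, hy.trans hx⟩
  conv g h a b hab := by
    obtain ⟨x, hx⟩ := H.surj a
    exact (H.conv g h a x hx).trans (H'.conv g h x b (hx.symm.trans hab))

lemma left_self (H : ColorIso c c') : ColorIso c c := H.trans H.symm

lemma map_zero (H : ColorIso c c') : c 0 = c' 0 := by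
  obtain ⟨b, hb⟩ := H.surj 0
  rwa [(H.zero_iff 0 b hb).1 rfl] at hb

lemma card_conv (H : ColorIso c c') (P Q : ι → Prop) [DecidablePred P] [DecidablePred Q]
    {a b : E9} (h : c a = c' b) :
    (Finset.univ.filter fun t => P (c t) ∧ Q (c (a - t))).card
      = (Finset.univ.filter fun t => P (c' t) ∧ Q (c' (b - t))).card := by
  have key := H.conv (fun i => if P i then 1 else 0) (fun i => if Q i then 1 else 0) a b h
  have tr : ∀ (d : E9 → ι) v,
      ((Finset.univ.filter fun t => P (d t) ∧ Q (d (v - t))).card : ℂ)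
        = ∑ t, (if P (d t) then 1 else 0) * (if Q (d (v - t)) then 1 else 0) := by
    intro d v
    rw [Finset.card_filter]
    push_cast
    refine Finset.sum_congr rfl fun t _ => ?_
    by_cases h₁ : P (d t) <;> simp [h₁]
  exact_mod_cast (tr c a).trans (key.trans (tr c' b).symm)

lemma card_color [DecidableEq ι] (H : ColorIso c c') (i : ι) :
    (Finset.univ.filter fun t => c t = i).card = (Finset.univ.filter fun t => c' t = i).card := by
  simpa using H.card_conv (· = i) (fun _ => True) H.map_zero

section Symmetric

lemma sum_E9 (F : E9 → ℕ) (hF : ∀ x, F (-x) = F x) :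
    ∑ x, F x = F 0 + 2 * ∑ t, F (lineRep t) := by
  have h : (Finset.univ : Finset E9) = {0, lineRep 0, -lineRep 0, lineRep 1, -lineRep 1,
      lineRep 2, -lineRep 2, lineRep 3, -lineRep 3} := by decide
  rw [h, Fin.sum_univ_four]
  repeat rw [Finset.sum_insert (by decide)]
  rw [Finset.sum_singleton]
  simp only [hF]
  ring

lemma exists_perm_of_card {α : Type*} [Fintype α] [DecidableEq α] [DecidableEq ι] (d d' : α → ι)
    (h : ∀ i, (Finset.univ.filter fun t => d t = i).card
      = (Finset.univ.filter fun t => d' t = i).card) {t s : α} (hts : d t = d' s) :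
    ∃ σ : Equiv.Perm α, σ t = s ∧ ∀ x, d' (σ x) = d x := by
  have e : ∀ i, Nonempty ({x // d x = i} ≃ {x // d' x = i}) := fun i =>
    Fintype.card_eq.1 (by simpa [Fintype.card_subtype] using h i)
  let τ : Equiv.Perm α := (Equiv.sigmaFiberEquiv d).symm.trans
    ((Equiv.sigmaCongrRight fun i => (e i).some).trans (Equiv.sigmaFiberEquiv d'))
  have hτ : ∀ x, d' (τ x) = d x := fun x => ((e (d x)).some ⟨x, rfl⟩).2
  refine ⟨τ.trans (Equiv.swap (τ t) s), by simp, fun x => ?_⟩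
  rw [← hτ x, Equiv.trans_apply]
  rcases eq_or_ne (τ x) (τ t) with h1 | h1
  · rw [h1, Equiv.swap_apply_left, hτ, hts]
  rcases eq_or_ne (τ x) s with h2 | h2
  · rw [h2, Equiv.swap_apply_right, hτ, hts]
  · rw [Equiv.swap_apply_of_ne_of_ne h1 h2]

lemma exists_addEquiv_of_symmetric (H : ColorIso c c') (hc : ∀ x, c (-x) = c x) {a b : E9}
    (hab : c a = c' b) : ∃ f : E9 ≃+ E9, f a = b ∧ ∀ x, c' (f x) = c x := by
  classical
  wlog ha : a ≠ 0 generalizing a b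
  · obtain ⟨b', hb'⟩ := H.surj (1, 0)
    obtain ⟨f, -, hf⟩ := this hb' (by decide)
    rw [not_not] at ha
    exact ⟨f, by rw [ha, (H.zero_iff a b hab).1 ha, _root_.map_zero], hf⟩
  have hc' : ∀ x, c' (-x) = c' x := fun x => by
    obtain ⟨y, hy⟩ := H.surj' x
    rw [← H.neg y x hy, hc, hy]
  have hb : b ≠ 0 := mt (H.zero_iff a b hab).2 ha
  obtain ⟨t, ht⟩ := exists_lineRep a ha
  obtain ⟨s, hs⟩ := exists_lineRep b hb
  have hcard : ∀ i, (Finset.univ.filter fun t => c (lineRep t) = i).card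
      = (Finset.univ.filter fun t => c' (lineRep t) = i).card := by
    intro i
    have key := H.card_color i
    rw [Finset.card_filter, Finset.card_filter, sum_E9 _ (fun x => by rw [hc]),
      sum_E9 _ (fun x => by rw [hc']), H.map_zero] at key
    rw [Finset.card_filter, Finset.card_filter]
    omega
  have hct : c (lineRep t) = c a := by rcases ht with rfl | rfl <;> simp [hc]
  have hcs : c' (lineRep s) = c' b := by rcases hs with rfl | rfl <;> simp [hc']
  obtain ⟨σ, hσt, hσ⟩ := exists_perm_of_card (fun t => c (lineRep t)) (fun t => c' (lineRep t))
    hcard (t := t) (s := s) (by rw [hct, hcs, hab])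
  obtain ⟨f, hf⟩ := exists_addEquiv_lineRep σ
  have hcol : ∀ x, c' (f x) = c x := by
    intro x
    rcases eq_or_ne x 0 with rfl | hx
    · rw [_root_.map_zero, H.map_zero]
    obtain ⟨t, rfl | rfl⟩ := exists_lineRep x hx
    · rcases hf t with h | h <;> simp [h, hc', hσ]
    · rcases hf t with h | h <;> simp [h, hc', hc, hσ]
  have hfa : f a = b ∨ f a = -b := by
    have hft := hf t
    rw [hσt] at hft
    rcases ht with rfl | rfl <;> rcases hs with rfl | rfl <;> rcases hft with h | h <;> simp [h]
  rcases hfa with h | h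
  · exact ⟨f, h, hcol⟩
  · exact ⟨f.trans (AddEquiv.neg E9), by simp [h], fun x => by simp [hc', hcol]⟩

end Symmetric

end ColorIso

namespace E9

lemma exists_smul_eq : ∀ s a : E9, s ≠ 0 → det s a = 0 → ∃ i : ZMod 3, a = i • s := by
  decide +kernel

lemma det_smul_self (s : E9) (i : ZMod 3) : det s (i • s) = 0 := by
  simp only [det, Prod.smul_fst, Prod.smul_snd, smul_eq_mul]
  ring

lemma exists_det_ne_zero : ∀ s : E9, s ≠ 0 → ∃ a, det s a ≠ 0 := by decide +kernel

lemma det_neg_left (d e : E9) : det (-d) e = -det d e := by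
  simp only [det, Prod.fst_neg, Prod.snd_neg]
  ring

lemma eq_or_eq_add_smul : ∀ d e x : E9, (det d e ≠ 0 ∧ x ≠ 0) →
    (x = d ∨ x = -d) ∨ ∃ i : ZMod 3, x = e + i • d ∨ x = -(e + i • d) := by
  decide +kernel

end E9

namespace ColorIso

variable {ι : Type} {c c' : E9 → ι}

lemma exists_addEquiv_of_basis (H : ColorIso c c') {s a s' a' : E9} (h : det s a ≠ 0)
    (h' : det s' a' ≠ 0) (hs : c s = c' s')
    (ha : ∀ i : ZMod 3, c (a + i • s) = c' (a' + i • s')) :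
    ∃ f : E9 ≃+ E9, f s = s' ∧ f a = a' ∧ ∀ x, c' (f x) = c x := by
  obtain ⟨f, hf⟩ := exists_addEquiv h h'
  refine ⟨f, by simpa only [comb_one_zero] using hf (1, 0),
    by simpa only [comb_zero_one] using hf (0, 1), fun x => ?_⟩
  obtain ⟨⟨i, j⟩, rfl⟩ := exists_comb h x
  rw [hf, comb_eq, comb_eq]
  have three : ∀ k : ZMod 3, k = 0 ∨ k = 1 ∨ k = -1 := by decide
  rcases three j with rfl | rfl | rfl
  · rcases three i with rfl | rfl | rfl
    · simpa using H.map_zero.symm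
    · simpa using hs.symm
    · simpa using (H.neg _ _ hs).symm
  · rw [one_smul, one_smul, add_comm, add_comm (i • s), ha]
  · have := H.neg _ _ (ha (-i))
    rw [neg_add, neg_add, neg_smul, neg_smul, neg_neg, neg_neg] at this
    rw [neg_one_smul, neg_one_smul, add_comm, add_comm (i • s), this]

lemma map_add_singleton (H : ColorIso c c') {s s' : E9}
    (hs' : ∀ y, c' y = c' s' → y = s') (hss : c s = c' s') {a b : E9} (h : c a = c' b) :
    c (a + s) = c' (b + s') := by
  classical
  have key := H.card_conv (· = c (-s)) (· = c (a + s)) h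
  have hne : (Finset.univ.filter fun t => c t = c (-s) ∧ c (a - t) = c (a + s)).Nonempty :=
    ⟨-s, by simp⟩
  rw [← Finset.card_pos, key, Finset.card_pos] at hne
  obtain ⟨t, ht⟩ := hne
  obtain ⟨h1, h2⟩ := (Finset.mem_filter.1 ht).2
  have h3 := H.neg _ _ h1.symm
  rw [neg_neg, hss] at h3
  have h4 : t = -s' := by rw [← hs' _ h3.symm, neg_neg]
  rw [← h2, h4, sub_neg_eq_add]

lemma exists_addEquiv_of_singleton (H : ColorIso c c') {s : E9} (hs0 : s ≠ 0)
    (hs : ∀ y, c y = c s → y = s) {a b : E9} (hab : c a = c' b) :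
    ∃ f : E9 ≃+ E9, f a = b ∧ ∀ x, c' (f x) = c x := by
  classical
  obtain ⟨s', hss⟩ := H.surj s
  have hs' : ∀ y, c' y = c' s' → y = s' := by
    have h1 : (Finset.univ.filter fun t => c t = c s) = {s} := by
      ext y
      simp only [Finset.mem_filter, Finset.mem_univ, true_and, Finset.mem_singleton]
      exact ⟨hs y, fun h => h ▸ rfl⟩
    have h2 := H.card_color (c s)
    rw [h1, Finset.card_singleton, eq_comm, Finset.card_eq_one] at h2
    obtain ⟨z, hz⟩ := h2
    have h3 : ∀ y, c' y = c s → y = z := fun y hy => by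
      rw [← Finset.mem_singleton, ← hz]
      simpa using hy
    intro y hy
    rw [h3 y (hy.trans hss.symm), h3 s' hss.symm]
  have hs0' : s' ≠ 0 := mt (H.zero_iff s s' hss).2 hs0
  have shift : ∀ {a b}, c a = c' b → ∀ i : ZMod 3, c (a + i • s) = c' (b + i • s') := by
    intro a b h i
    have h1 := H.map_add_singleton hs' hss h
    have h2 := H.map_add_singleton hs' hss h1
    have three : ∀ k : ZMod 3, k = 0 ∨ k = 1 ∨ k = 1 + 1 := by decide
    rcases three i with rfl | rfl | rfl
    · simpa using h
    · simpa using h1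
    · simpa only [add_smul, one_smul, ← add_assoc] using h2
  have det_ne : ∀ {a b}, c a = c' b → det s a ≠ 0 → det s' b ≠ 0 := by
    intro a b h ha hb
    obtain ⟨i, rfl⟩ := exists_smul_eq _ _ hs0' hb
    have h1 := shift h (-i)
    rw [neg_smul, neg_smul, add_neg_cancel, ← sub_eq_add_neg] at h1
    have h2 := sub_eq_zero.1 ((H.zero_iff _ _ h1).2 rfl)
    exact ha (h2 ▸ det_smul_self s i)
  by_cases ha : det s a = 0
  · obtain ⟨a₁, ha₁⟩ := exists_det_ne_zero s hs0
    obtain ⟨b₁, hb₁⟩ := H.surj a₁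
    obtain ⟨f, hfs, -, hf⟩ := H.exists_addEquiv_of_basis ha₁ (det_ne hb₁ ha₁) hss (shift hb₁)
    refine ⟨f, ?_, hf⟩
    obtain ⟨i, rfl⟩ := exists_smul_eq _ _ hs0 ha
    have h1 := shift hab (-i)
    rw [neg_smul, neg_smul, add_neg_cancel, ← sub_eq_add_neg] at h1
    rw [sub_eq_zero.1 ((H.zero_iff _ _ h1).1 rfl), ← hfs]
    have := map_nsmul f i.val s
    rwa [← Nat.cast_smul_eq_nsmul (ZMod 3), ← Nat.cast_smul_eq_nsmul (ZMod 3),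
      ZMod.natCast_zmod_val] at this
  · obtain ⟨f, -, hfa, hf⟩ := H.exists_addEquiv_of_basis ha (det_ne hab ha) hss (shift hab)
    exact ⟨f, hfa, hf⟩

lemma eq_or_eq_neg_of_symmetric (H : ColorIso c c) {d e y : E9} (he : c (-e) ≠ c e)
    (hd : det d e ≠ 0) (hc : ∀ i : ZMod 3, c (e + i • d) = c e) (hy0 : y ≠ 0)
    (hy : c (-y) = c y) : y = d ∨ y = -d := by
  refine (eq_or_eq_add_smul d e y ⟨hd, hy0⟩).resolve_right ?_
  have key : ∀ i : ZMod 3, c (-(e + i • d)) = c (-e) := fun i => H.neg _ _ (hc i)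
  rintro ⟨i, rfl | rfl⟩
  · exact he (by rw [← key, hy, hc])
  · rw [neg_neg, hc, key] at hy
    exact he hy.symm

lemma isEven_color [DecidableEq ι] (H : ColorIso c c) (e : E9) :
    IsEven (Finset.univ.filter fun y => c y = c e) := by
  have hsum : ∀ y, sumCount (Finset.univ.filter fun y => c y = c e) y =
      (Finset.univ.filter fun t => c t = c e ∧ c (y - t) = c e).card := fun y => by
    unfold sumCount
    rw [Finset.filter_filter]
    simp
  have hdiff : ∀ y, diffCount (Finset.univ.filter fun y => c y = c e) y =
      (Finset.univ.filter fun t => c t = c e ∧ c (y - t) = c (-e)).card := fun y => by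
    unfold diffCount
    rw [Finset.filter_filter]
    congr 1
    ext t
    simp only [Finset.mem_filter, Finset.mem_univ, true_and]
    refine and_congr_right fun _ => ⟨fun h => ?_, fun h => ?_⟩
    · rw [← H.neg _ _ h, neg_sub]
    · simpa using H.neg _ _ h
  intro y hy z hz
  simp only [Finset.mem_filter, Finset.mem_univ, true_and] at hy hz
  rw [hdiff, hdiff, hsum, hsum, hsum, hsum]
  have hyz : c y = c z := hy.trans hz.symm
  exact ⟨H.card_conv (· = c e) (· = c (-e)) hyz, H.card_conv (· = c e) (· = c e) hyz,
    H.card_conv (· = c e) (· = c e) (H.neg _ _ hyz)⟩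

lemma exists_singleton_or_coset (H : ColorIso c c) {e : E9} (he : c (-e) ≠ c e) :
    (∃ s, s ≠ 0 ∧ ∀ y, c y = c s → y = s) ∨
      ∃ d, c (-d) = c d ∧ det d e ≠ 0 ∧ ∀ i : ZMod 3, c (e + i • d) = c e := by
  classical
  set X := Finset.univ.filter fun y => c y = c e with hX
  have hmem : ∀ y, y ∈ X ↔ c y = c e := fun y => by simp [hX]
  have hanti : ∀ y ∈ X, -y ∉ X := fun y hy hy' => by
    rw [hmem] at hy hy'
    exact he (by rw [← H.neg _ _ hy, hy'])
  rcases antisymm_cases X ⟨⟨e, (hmem e).2 rfl⟩, hanti⟩ (H.isEven_color e) with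
    ⟨s, hs0, hs⟩ | ⟨d, hd⟩
  · refine .inl ⟨s, hs0, fun y hy => hs y ?_⟩
    have hsum : ∀ y, sumCount X y =
        (Finset.univ.filter fun t => c t = c e ∧ c (y - t) = c e).card := fun y => by
      unfold sumCount
      rw [hX, Finset.filter_filter]
      simp
    rw [hsum, hsum]
    exact H.card_conv (· = c e) (· = c e) hy
  · obtain ⟨hde, hcos⟩ := hd e ((hmem e).2 rfl)
    have hcos' : ∀ i : ZMod 3, c (e + i • d) = c e := fun i => (hmem _).1 (hcos i)
    by_cases hsym : c (-d) = c d
    · exact .inr ⟨d, hsym, hde, hcos'⟩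
    refine .inl ⟨d, fun h => hde (by simp [h, det]), fun y hy => ?_⟩
    have hdX : d ∉ X := fun h => (hd d h).1 (by simpa using det_smul_self d 1)
    have hdX' : -d ∉ X := fun h => (hd _ h).1 (by simpa using det_smul_self d (-1))
    have hy0 : y ≠ 0 := fun h => hsym (by
      have := (H.zero_iff _ _ hy).1 h
      rw [this, neg_zero])
    rcases eq_or_eq_add_smul d e y ⟨hde, hy0⟩ with (h | rfl) | ⟨i, rfl | rfl⟩
    · exact h
    · exact absurd hy hsym
    · exact absurd ((hmem d).2 (by rw [← hy, hcos'])) hdX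
    · refine absurd ((hmem (-d)).2 ?_) hdX'
      have := H.neg _ _ hy
      rw [neg_neg, hcos'] at this
      exact this.symm

/-- Isomorphic colorings are conjugate under `GL(2, 3)`, by a map with one prescribed value. -/
theorem exists_addEquiv (H : ColorIso c c') {a b : E9} (hab : c a = c' b) :
    ∃ f : E9 ≃+ E9, f a = b ∧ ∀ x, c' (f x) = c x := by
  by_cases hc : ∀ x, c (-x) = c x
  · exact H.exists_addEquiv_of_symmetric hc hab
  by_cases hs : ∃ s, s ≠ 0 ∧ ∀ y, c y = c s → y = s
  · obtain ⟨s, hs0, hs⟩ := hs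
    exact H.exists_addEquiv_of_singleton hs0 hs hab
  by_cases hs' : ∃ s, s ≠ 0 ∧ ∀ y, c' y = c' s → y = s
  · obtain ⟨s, hs0, hs'⟩ := hs'
    obtain ⟨f, hf, hf'⟩ := H.symm.exists_addEquiv_of_singleton hs0 hs' hab.symm
    exact ⟨f.symm, by rw [← hf, f.symm_apply_apply], fun x => by
      rw [← hf', f.apply_symm_apply]⟩
  obtain ⟨e, e', hee, he, hae⟩ : ∃ e e', c e = c' e' ∧ c (-e) ≠ c e ∧
      (c (-a) ≠ c a → a = e ∧ b = e') := by
    by_cases ha : c (-a) = c a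
    · push Not at hc
      obtain ⟨e, he⟩ := hc
      obtain ⟨e', hee⟩ := H.surj e
      exact ⟨e, e', hee, he, fun h => absurd ha h⟩
    · exact ⟨a, b, hab, ha, fun _ => ⟨rfl, rfl⟩⟩
  have he' : c' (-e') ≠ c' e' := by rwa [← hee, ← H.neg _ _ hee]
  obtain ⟨d, hd, hde, hcos⟩ := (H.left_self.exists_singleton_or_coset he).resolve_left hs
  obtain ⟨d', hd', hde', hcos'⟩ :=
    (H.symm.left_self.exists_singleton_or_coset he').resolve_left hs'
  have hd0 : d ≠ 0 := fun h => hde (by simp [h, det])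
  have sym : ∀ {x y}, c x = c' y → x ≠ 0 → c (-x) = c x → y = d' ∨ y = -d' := by
    intro x y hxy hx0 hx
    exact H.symm.left_self.eq_or_eq_neg_of_symmetric he' hde' hcos' (mt (H.zero_iff x y hxy).2 hx0)
      (by rw [← H.neg _ _ hxy, hx, hxy])
  have hdd : c d = c' d' := by
    obtain ⟨y, hy⟩ := H.surj d
    rcases sym hy hd0 hd with rfl | rfl
    · exact hy
    · rw [hy, hd']
  obtain ⟨f, hfd, hfe, hf⟩ :=
    H.exists_addEquiv_of_basis hde hde' hdd fun i => by rw [hcos, hcos', hee]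
  obtain ⟨f', hfd', hfe', hf'⟩ :=
    H.exists_addEquiv_of_basis (s' := -d') hde (by rwa [det_neg_left, neg_ne_zero])
      (hdd.trans hd'.symm) fun i => by rw [smul_neg, ← neg_smul, hcos, hcos', hee]
  by_cases ha : c (-a) = c a
  · rcases eq_or_ne a 0 with rfl | ha0
    · exact ⟨f, by rw [(H.zero_iff _ _ hab).1 rfl, _root_.map_zero], hf⟩
    rcases H.left_self.eq_or_eq_neg_of_symmetric he hde hcos ha0 ha with rfl | rfl <;>
      rcases sym hab ha0 ha with rfl | rfl
    · exact ⟨f, hfd, hf⟩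
    · exact ⟨f', hfd', hf'⟩
    · exact ⟨f', by rw [map_neg, hfd', neg_neg], hf'⟩
    · exact ⟨f, by rw [map_neg, hfd], hf⟩
  · obtain ⟨rfl, rfl⟩ := hae ha
    exact ⟨f, hfe, hf⟩

end ColorIso

namespace IsDenseRel

variable {p : ℕ} [Fact p.Prime] {r : Setoid (E9 × ZMod p)}

lemma colorIso (hr : IsDenseRel r) {u : (ZMod p)ˣ} (hu : r (0, 1) (0, (u : ZMod p))) :
    ColorIso (fun x => (Quotient.mk r (x, 1))) (fun x => Quotient.mk r (x, (u : ZMod p))) where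
  zero_iff a b h := hr.right_iff _ _ (Quotient.exact h)
  neg a b h := Quotient.sound <| by
    have := hr.mul_right (by simp) (hr.neg _ _ (Quotient.exact h)) (-1)
    simpa using this
  surj a := (hr.exists_of_right hu a).imp fun _ h => Quotient.sound h
  surj' b := (hr.exists_of_right (r.symm hu) b).imp fun _ h => Quotient.sound (r.symm h)
  conv g h a b hab := hr.sum_fibre_eq (by simp) (g := fun x => g (Quotient.mk r x))
    (h := fun x => h (Quotient.mk r x)) (fun _ _ hxy => congrArg g (Quotient.sound hxy))
    (fun _ _ hxy => congrArg h (Quotient.sound hxy)) (Quotient.exact hab)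

lemma exists_automorphism_of_one (hr : IsDenseRel r) {a b : E9} {u : (ZMod p)ˣ}
    (h : r (a, 1) (b, (u : ZMod p))) :
    ∃ φ : E9 ≃+ E9, φ a = b ∧ ∀ x z, r (x, z) (φ x, u * z) := by
  obtain ⟨φ, hφ, hφ'⟩ := (hr.colorIso (hr.proj_right h)).exists_addEquiv (Quotient.sound h)
  have h1 : ∀ x, r (x, 1) (φ x, (u : ZMod p)) := fun x => r.symm (Quotient.exact (hφ' x))
  refine ⟨φ, hφ, fun x z => ?_⟩
  rcases eq_or_ne z 0 with rfl | hz
  · rw [mul_zero]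
    exact hr.proj_left (h1 x)
  · have := hr.mul_right (by simp) (h1 x) (Units.mk0 z hz)
    rwa [Units.val_mk0, mul_one, mul_comm z] at this

/-- Classes of a dense Schur relation are orbits of automorphisms preserving the relation. -/
theorem exists_automorphism (hr : IsDenseRel r) {a b : E9} {z w : ZMod p}
    (h : r (a, z) (b, w)) :
    ∃ (φ : E9 ≃+ E9) (u : (ZMod p)ˣ), φ a = b ∧ u * z = w ∧ ∀ x z, r (x, z) (φ x, u * z) := by
  rcases eq_or_ne z 0 with rfl | hz
  · obtain rfl : w = 0 := hr.left _ _ h rfl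
    obtain ⟨v, hv⟩ := hr.exists_of_left h 1
    have hv0 : v ≠ 0 := fun h0 => one_ne_zero (hr.left _ _ (r.symm hv) h0)
    obtain ⟨φ, hφ, hφ'⟩ := hr.exists_automorphism_of_one (u := Units.mk0 v hv0) hv
    exact ⟨φ, _, hφ, mul_zero _, hφ'⟩
  · have hw : w ≠ 0 := fun h0 => hz (hr.left _ _ (r.symm h) h0)
    have h1 := hr.mul_right (by simp) h (Units.mk0 z hz)⁻¹
    rw [Units.val_inv_eq_inv_val, Units.val_mk0, inv_mul_cancel₀ hz] at h1
    obtain ⟨φ, hφ, hφ'⟩ := hr.exists_automorphism_of_one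
      (u := (Units.mk0 z hz)⁻¹ * Units.mk0 w hw) h1
    refine ⟨φ, _, hφ, ?_, hφ'⟩
    rw [Units.val_mul, Units.val_inv_eq_inv_val, Units.val_mk0, Units.val_mk0, mul_right_comm,
      inv_mul_cancel₀ hz, one_mul]

end IsDenseRel

namespace SchurRing

variable {G : Type*} [Group G] [Fintype G]

/-- The automorphisms mapping every basic set to itself. -/
def automorphismGroup (A : SchurRing G) : Subgroup (MulAut G) where
  carrier := {m | ∀ x, A.basicRel x (m x)}
  one_mem' := basicRel_refl
  mul_mem' hm hn x := basicRel_trans (hn x) (hm _)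
  inv_mem' {m} hm x := basicRel_symm (by simpa using hm (m⁻¹ x))

lemma isCyclotomic_of_transitive (A : SchurRing G)
    (h : ∀ x y, A.basicRel x y → ∃ m : MulAut G, m x = y ∧ ∀ t, A.basicRel t (m t)) :
    A.IsCyclotomic := by
  have horb : ∀ X ∈ A.basicSets, ∀ x ∈ X, MulAction.orbit A.automorphismGroup x = X := by
    intro X hX x hx
    ext y
    constructor
    · rintro ⟨m, rfl⟩
      exact (basicRel_mem_iff hX (m.2 x)).1 hx
    · intro hy
      obtain ⟨m, rfl, hm⟩ := h x y ⟨X, hX, hx, hy⟩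
      exact ⟨⟨m, hm⟩, rfl⟩
  refine ⟨A.automorphismGroup, Set.ext fun X => ⟨fun hX => ?_, ?_⟩⟩
  · obtain ⟨x, hx⟩ := A.nonempty_mem X hX
    exact ⟨x, horb X hX x hx⟩
  · rintro ⟨x, rfl⟩
    obtain ⟨X, hX, hx⟩ := A.cover x
    simpa only [horb X hX x hx] using hX

end SchurRing

theorem dense_sring_over_E9xCp_cyclotomic (p : ℕ) [Fact p.Prime]
    (A : SchurRing (Multiplicative (ZMod 3 × ZMod 3) × Multiplicative (ZMod p)))
    (hA : A.IsASubgroup ((⊤ : Subgroup (Multiplicative (ZMod 3 × ZMod 3))).prod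
            (⊥ : Subgroup (Multiplicative (ZMod p)))))
    (hP : A.IsASubgroup ((⊥ : Subgroup (Multiplicative (ZMod 3 × ZMod 3))).prod
            (⊤ : Subgroup (Multiplicative (ZMod p))))) :
    A.IsCyclotomic := by
  let e : Multiplicative (E9 × ZMod p) ≃* Multiplicative E9 × Multiplicative (ZMod p) :=
    MulEquiv.prodMultiplicative E9 (ZMod p)
  have hr : IsDenseRel (A.addSetoid e) := {
    A.isSchurRel_addSetoid e with
    left := fun x y h hx => by
      have := (hA.mem_iff h).1 (Subgroup.mem_prod.2 ⟨trivial, Subgroup.mem_bot.2 hx⟩)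
      exact Subgroup.mem_bot.1 (Subgroup.mem_prod.1 this).2
    right := fun x y h hx => by
      have := (hP.mem_iff h).1 (Subgroup.mem_prod.2 ⟨Subgroup.mem_bot.2 hx, trivial⟩)
      exact Subgroup.mem_bot.1 (Subgroup.mem_prod.1 this).1 }
  refine A.isCyclotomic_of_transitive fun x y h => ?_
  obtain ⟨φ, u, hφ, hu, hm⟩ := hr.exists_automorphism (a := x.1.toAdd) (z := x.2.toAdd)
    (b := y.1.toAdd) (w := y.2.toAdd) h
  exact ⟨(AddEquiv.toMultiplicative φ).prodCongr
    (AddEquiv.toMultiplicative (DistribMulAction.toAddEquiv (ZMod p) u)),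
    Prod.ext hφ hu, fun t => hm t.1.toAdd t.2.toAdd⟩
end

section
/- Let 𝒜 be an S-ring over a finite abelian group G. Then every automorphism of G lying in the center of Aut(G) is a Cayley isomorphism from 𝒜 onto itself; that is, Z(Aut(G)) ≤ Iso_cay(𝒜). -/
open scoped Pointwise

section CenterAut

variable {G : Type*} [CommGroup G]

/-- The transvection `x ↦ x * φ x` attached to an endomorphism `φ` of square zero. -/
def MulAut.transvection (φ : G →* G) (hφ : ∀ x, φ (φ x) = 1) : MulAut G where
  toFun x := x * φ x
  invFun x := x * (φ x)⁻¹
  left_inv x := by simp [hφ]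
  right_inv x := by simp [hφ]
  map_mul' x y := by simp [mul_mul_mul_comm]

theorem MulAut.apply_comm_of_mem_center {σ : MulAut G} (hσ : σ ∈ Subgroup.center (MulAut G))
    (φ : G →* G) (hφ : ∀ x, φ (φ x) = 1) (x : G) : σ (φ x) = φ (σ x) := by
  have h := DFunLike.congr_fun (Subgroup.mem_center_iff.mp hσ (transvection φ hφ)) x
  simpa [transvection] using h.symm

theorem hasEnoughRootsOfUnity_zpowers {a : G} (ha : orderOf a = Monoid.exponent G) :
    HasEnoughRootsOfUnity (Subgroup.zpowers a) (Monoid.exponent G) where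
  prim := by
    refine ⟨⟨a, Subgroup.mem_zpowers a⟩, ?_⟩
    rw [← ha, ← Subgroup.orderOf_mk a (Subgroup.mem_zpowers a)]
    exact IsPrimitiveRoot.orderOf _
  cyc := by
    have : IsCyclic (Subgroup.zpowers a)ˣ :=
      isCyclic_of_surjective (toUnits (G := Subgroup.zpowers a)) toUnits.surjective
    infer_instance

variable [Finite G]

/-- A cyclic subgroup of maximal order is a retract. -/
theorem exists_retraction_zpowers {a : G} (ha : orderOf a = Monoid.exponent G) :
    ∃ r : G →* Subgroup.zpowers a, ∀ c : Subgroup.zpowers a, r c = c := by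
  have := hasEnoughRootsOfUnity_zpowers ha
  obtain ⟨φ, hφ⟩ := MonoidHom.domRestrict_surjective (Subgroup.zpowers a) (Subgroup.zpowers a)
    (toUnits (G := Subgroup.zpowers a)).toMonoidHom
  refine ⟨(Units.coeHom _).comp φ, fun c => ?_⟩
  have h := DFunLike.congr_fun hφ c
  simpa using congrArg Units.val h

theorem exists_monoidHom_zpowers_ne_one {a : G} (ha : orderOf a = Monoid.exponent G) {h : G}
    (hh : h ≠ 1) : ∃ φ : G →* Subgroup.zpowers a, φ h ≠ 1 := by
  have := hasEnoughRootsOfUnity_zpowers ha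
  obtain ⟨φ, hφ⟩ :=
    CommGroup.exists_apply_ne_one_of_hasEnoughRootsOfUnity G (Subgroup.zpowers a) hh
  exact ⟨(Units.coeHom _).comp φ, fun h => hφ (Units.ext h)⟩

/-- A central automorphism of a finite abelian group is a power map. -/
theorem MulAut.exists_eq_pow_of_mem_center {σ : MulAut G}
    (hσ : σ ∈ Subgroup.center (MulAut G)) : ∃ m : ℕ, ∀ x, σ x = x ^ m := by
  obtain ⟨a, ha⟩ := Monoid.exists_orderOf_eq_exponent (Monoid.ExponentExists.of_finite (G := G))
  obtain ⟨r, hr⟩ := exists_retraction_zpowers ha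
  set g : Subgroup.zpowers a := ⟨a, Subgroup.mem_zpowers a⟩ with hg
  have hgen : ∀ x, x ∈ Subgroup.zpowers g := fun ⟨x, k, hk⟩ => ⟨k, Subtype.ext hk⟩
  obtain ⟨m, hm⟩ : ∃ m : ℕ, g ^ m = r (σ a) :=
    (mem_powers_iff_mem_zpowers.mpr (hgen (r (σ a))) :)
  refine ⟨m, ?_⟩
  have hker : ∀ h : G, r h = 1 → σ h = h ^ m := by
    intro h hh
    have hord : orderOf h ∣ orderOf g := by
      rw [hg, Subgroup.orderOf_mk, ha]
      exact Monoid.order_dvd_exponent h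
    let k : Subgroup.zpowers a →* G := monoidHomOfForallMemZpowers hgen hord
    have hkg : k g = h := monoidHomOfForallMemZpowers_apply_gen hgen hord
    have hrk : ∀ c, r (k c) = 1 := by
      intro c
      obtain ⟨i, rfl⟩ := hgen c
      simp [hkg, hh]
    have hra : r a = g := hr g
    have := apply_comm_of_mem_center hσ (k.comp r) (fun x => by simp [hrk]) a
    simpa [hra, hkg, ← hm] using this
  have hσa : σ a = r (σ a) := by
    by_contra hne
    obtain ⟨φ, hφ⟩ := exists_monoidHom_zpowers_ne_one ha (h := σ a * (r (σ a) : G)⁻¹)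
      (fun h => hne (mul_inv_eq_one.mp h))
    let ψ : G →* G :=
      (Subgroup.subtype _).comp (φ.comp (MonoidHom.id G / (Subgroup.subtype _).comp r))
    have hψ : ∀ x, ψ x = φ (x * (r x : G)⁻¹) := fun x => by simp [ψ, div_eq_mul_inv]
    have hψr : ∀ c : Subgroup.zpowers a, ψ c = 1 := fun c => by simp [hψ, hr]
    have := apply_comm_of_mem_center hσ ψ (fun x => by rw [hψ x, hψr]) a
    rw [show ψ a = 1 from hψr g, map_one, hψ] at this
    exact hφ (Subtype.ext this.symm)
  have hσg : ∀ c : Subgroup.zpowers a, σ c = (c : G) ^ m := by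
    intro c
    obtain ⟨i, rfl⟩ := hgen c
    have : σ a = a ^ m := by rw [hσa, ← hm]; rfl
    simp only [hg, Subgroup.coe_zpow, map_zpow, this]
    rw [← zpow_natCast, ← zpow_natCast, zpow_comm]
  intro x
  calc σ x = σ (r x) * σ (x * (r x : G)⁻¹) := by rw [← map_mul]; simp
    _ = (r x : G) ^ m * (x * (r x : G)⁻¹) ^ m := by rw [hσg, hker _ (by simp [hr])]
    _ = x ^ m := by rw [← mul_pow]; simp

end CenterAut

theorem coeff_grpSum {G : Type*} [Group G] [Fintype G] (X : Set G) (g : G) :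
    (grpSum X).coeff g = X.indicator 1 g := by
  classical
  simp [grpSum, Set.indicator_apply, MonoidAlgebra.coeff_sum, Finsupp.single_apply, apply_ite,
    Finset.sum_ite]

namespace SchurRing

section Group

variable {G : Type*} [Group G] [Fintype G] (A : SchurRing G)

theorem eq_of_mem_of_mem {X Y : Set G} (hX : X ∈ A.basicSets) (hY : Y ∈ A.basicSets) {g : G}
    (hgX : g ∈ X) (hgY : g ∈ Y) : X = Y := by
  by_contra h
  exact (A.disjoint' X hX Y hY h).subset ⟨hgX, hgY⟩

theorem isASet_iff {S : Set G} :
    A.IsASet S ↔ ∀ Y ∈ A.basicSets, ∀ g ∈ Y, g ∈ S → Y ⊆ S := by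
  constructor
  · rintro ⟨T, hT, rfl⟩ Y hY g hgY ⟨X, hX, hgX⟩
    rw [A.eq_of_mem_of_mem hY (hT hX) hgY hgX]
    exact Set.subset_sUnion_of_mem hX
  · intro h
    refine ⟨{Y ∈ A.basicSets | Y ⊆ S}, fun _ hY => hY.1, subset_antisymm ?_ ?_⟩
    · intro g hg
      obtain ⟨Y, hY, hgY⟩ := A.cover g
      exact ⟨Y, ⟨hY, h Y hY g hgY hg⟩, hgY⟩
    · exact Set.sUnion_subset fun _ hY => hY.2

theorem isASet_of_mem {X : Set G} (hX : X ∈ A.basicSets) : A.IsASet X :=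
  ⟨{X}, by simpa using hX, by simp⟩

theorem coeff_eq_of_mem_span_s5 {f : MonoidAlgebra ℤ G}
    (hf : f ∈ Submodule.span ℤ (grpSum '' A.basicSets)) {Y : Set G} (hY : Y ∈ A.basicSets)
    {g h : G} (hg : g ∈ Y) (hh : h ∈ Y) : f.coeff g = f.coeff h := by
  induction hf using Submodule.span_induction with
  | mem f hf =>
    obtain ⟨X, hX, rfl⟩ := hf
    have : g ∈ X ↔ h ∈ X :=
      ⟨fun hgX => A.eq_of_mem_of_mem hY hX hg hgX ▸ hh,
        fun hhX => A.eq_of_mem_of_mem hY hX hh hhX ▸ hg⟩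
    classical
    simp [coeff_grpSum, Set.indicator_apply, this]
  | zero => simp
  | add f₁ f₂ _ _ h₁ h₂ => simp [h₁, h₂]
  | smul c f _ h => rw [MonoidAlgebra.coeff_smul, Finsupp.smul_apply, Finsupp.smul_apply, h]

theorem mul_mem_span {f₁ f₂ : MonoidAlgebra ℤ G}
    (h₁ : f₁ ∈ Submodule.span ℤ (grpSum '' A.basicSets))
    (h₂ : f₂ ∈ Submodule.span ℤ (grpSum '' A.basicSets)) :
    f₁ * f₂ ∈ Submodule.span ℤ (grpSum '' A.basicSets) := by
  have h : Submodule.span ℤ (grpSum '' A.basicSets) * Submodule.span ℤ (grpSum '' A.basicSets) ≤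
      Submodule.span ℤ (grpSum '' A.basicSets) := by
    rw [Submodule.span_mul_span, Submodule.span_le]
    rintro _ ⟨_, ⟨X, hX, rfl⟩, _, ⟨Y, hY, rfl⟩, rfl⟩
    exact A.mul_mem X hX Y hY
  exact h (Submodule.mul_mem_mul h₁ h₂)

theorem pow_succ_mem_span {f : MonoidAlgebra ℤ G}
    (hf : f ∈ Submodule.span ℤ (grpSum '' A.basicSets)) (n : ℕ) :
    f ^ (n + 1) ∈ Submodule.span ℤ (grpSum '' A.basicSets) := by
  induction n with
  | zero => simpa using hf
  | succ n ih => rw [pow_succ]; exact A.mul_mem_span ih hf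

end Group

section CommGroup

variable {G : Type*} [CommGroup G] [Fintype G] (A : SchurRing G)

theorem coeff_grpSum_pow_prime {p : ℕ} [Fact p.Prime] (hp : (Nat.card G).Coprime p) (X : Set G)
    (y : G) : (((grpSum X ^ p).coeff (y ^ p) : ℤ) : ZMod p) = X.indicator 1 y := by
  classical
  have : CharP (MonoidAlgebra (ZMod p) G) p := charP_of_injective_algebraMap' (ZMod p) p
  have hinj : ∀ x z : G, x ^ p = z ^ p ↔ x = z := fun x z => (powCoprime hp).injective.eq_iff
  have hF : MonoidAlgebra.mapRingHom G (Int.castRingHom (ZMod p)) (grpSum X) ^ p =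
      ∑ x : G, X.indicator (fun g => MonoidAlgebra.single (g ^ p) (1 : ZMod p)) x := by
    rw [grpSum, map_sum, sum_pow_char]
    refine Finset.sum_congr rfl fun x _ => ?_
    by_cases hx : x ∈ X
    · simp [hx, MonoidAlgebra.single_pow]
    · simp [hx, (Fact.out : p.Prime).ne_zero]
  calc (((grpSum X ^ p).coeff (y ^ p) : ℤ) : ZMod p)
      = (MonoidAlgebra.mapRingHom G (Int.castRingHom (ZMod p)) (grpSum X ^ p)).coeff (y ^ p) := by
        simp [-map_pow]
    _ = X.indicator 1 y := by
        rw [map_pow (MonoidAlgebra.mapRingHom G _), hF]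
        simp [Set.indicator_apply, MonoidAlgebra.coeff_sum, Finsupp.single_apply, apply_ite, hinj,
          Finset.sum_ite]

theorem isASet_image_pow_prime {p : ℕ} (hp : p.Prime) (hpG : (Nat.card G).Coprime p) {S : Set G}
    (hS : A.IsASet S) : A.IsASet ((· ^ p) '' S) := by
  have : Fact p.Prime := ⟨hp⟩
  rw [isASet_iff]
  rintro Y hY _ hg ⟨x, hx, rfl⟩ h hh
  obtain ⟨X, hX, hxX⟩ := A.cover x
  obtain ⟨z, rfl⟩ := (powCoprime hpG).surjective h
  have hmem : grpSum X ^ p ∈ Submodule.span ℤ (grpSum '' A.basicSets) := by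
    rw [← Nat.sub_add_cancel hp.one_le]
    exact A.pow_succ_mem_span (Submodule.subset_span ⟨X, hX, rfl⟩) _
  have hcoeff := congrArg (Int.cast (R := ZMod p)) (A.coeff_eq_of_mem_span_s5 hmem hY hg hh)
  rw [powCoprime_apply, coeff_grpSum_pow_prime hpG, coeff_grpSum_pow_prime hpG,
    Set.indicator_of_mem hxX] at hcoeff
  have hzX : z ∈ X := Set.mem_of_indicator_ne_zero (hcoeff.symm.trans_ne one_ne_zero)
  exact ⟨z, A.isASet_iff.mp hS X hX x hxX hx hzX, rfl⟩

/-- Schur's theorem on multipliers, for unions of basic sets. -/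
theorem isASet_image_pow {m : ℕ} (hm : (Nat.card G).Coprime m) {S : Set G} (hS : A.IsASet S) :
    A.IsASet ((· ^ m) '' S) := by
  induction m using induction_on_primes generalizing S with
  | zero =>
    have : Subsingleton G := (Nat.card_eq_one_iff_unique.mp (by simpa using hm)).1
    rwa [show (fun x : G => x ^ 0) = id from funext fun x => Subsingleton.elim _ _, Set.image_id]
  | one => simpa using hS
  | prime_mul p a hp ih =>
    have := ih hm.coprime_mul_left_right (A.isASet_image_pow_prime hp hm.coprime_mul_right_right hS)
    simpa [Set.image_image, ← pow_mul] using this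

theorem isASet_image_of_mem_center {σ : MulAut G} (hσ : σ ∈ Subgroup.center (MulAut G))
    {S : Set G} (hS : A.IsASet S) : A.IsASet (σ '' S) := by
  obtain ⟨m, hm⟩ := MulAut.exists_eq_pow_of_mem_center hσ
  rw [show ⇑σ = (· ^ m) from funext hm]
  refine A.isASet_image_pow (Nat.coprime_of_dvd fun p hp hpG hpm => ?_) hS
  have : Fact p.Prime := ⟨hp⟩
  obtain ⟨x, hx⟩ := exists_prime_orderOf_dvd_card' p hpG
  have hx1 : σ x = 1 := by rw [hm, ← orderOf_dvd_iff_pow_eq_one, hx]; exact hpm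
  rw [map_eq_one_iff σ σ.injective] at hx1
  exact hp.one_lt.ne' (by rw [← hx, hx1, orderOf_one])

theorem image_mem_of_mem_center {σ : MulAut G} (hσ : σ ∈ Subgroup.center (MulAut G))
    {X : Set G} (hX : X ∈ A.basicSets) : σ '' X ∈ A.basicSets := by
  obtain ⟨x, hx⟩ := A.nonempty_mem X hX
  obtain ⟨Y, hY, hxY⟩ := A.cover (σ x)
  have hYX : Y ⊆ σ '' X :=
    A.isASet_iff.mp (A.isASet_image_of_mem_center hσ (A.isASet_of_mem hX)) Y hY _ hxY
      (Set.mem_image_of_mem σ hx)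
  have hXY : X ⊆ ⇑σ⁻¹ '' Y :=
    A.isASet_iff.mp (A.isASet_image_of_mem_center (InvMemClass.inv_mem hσ) (A.isASet_of_mem hY)) X hX x hx
      ⟨σ x, hxY, MulAut.inv_apply_self _ σ x⟩
  have hXY' : σ '' X ⊆ Y := by
    rintro _ ⟨z, hz, rfl⟩
    obtain ⟨y, hy, rfl⟩ := hXY hz
    rwa [MulAut.apply_inv_self]
  rwa [hXY'.antisymm hYX]

end CommGroup

end SchurRing

theorem center_aut_le_isoCay {G : Type*} [CommGroup G] [Fintype G]
    (A : SchurRing G) (σ : MulAut G) (hσ : σ ∈ Subgroup.center (MulAut G)) :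
    IsCayleyIso A A (σ : G ≃* G) := by
  refine subset_antisymm ?_ fun X hX => ?_
  · rintro _ ⟨X, hX, rfl⟩
    exact A.image_mem_of_mem_center hσ hX
  · refine ⟨⇑σ⁻¹ '' X, A.image_mem_of_mem_center (InvMemClass.inv_mem hσ) hX, ?_⟩
    simp [Set.image_image]
end

section
/- Up to Cayley isomorphism, there are exactly ten S-rings over the elementary abelian group E_9 of order 9. -/
open scoped Pointwise

namespace SchurRing

section Coloring

variable {G κ : Type*} [Group G] [Fintype G]

lemma coeff_grpSum (X : Set G) (g : G) : (grpSum X).coeff g = X.indicator 1 g := by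
  classical
  have h (x : G) : (X.indicator (fun g => MonoidAlgebra.single g (1 : ℤ)) x).coeff g =
      if x = g then X.indicator 1 g else 0 := by
    by_cases hx : x ∈ X <;> by_cases hg : x = g <;>
      simp_all
  simp only [grpSum, MonoidAlgebra.coeff_sum, Finsupp.finsetSum_apply, h]
  simp

/-- The number of factorizations `g = x * y` with `x` of color `a` and `y` of color `b`. -/
def colorCount [DecidableEq κ] (c : G → κ) (a b : κ) (g : G) : ℕ :=
  ∑ x : G, if c x = a ∧ c (x⁻¹ * g) = b then 1 else 0

lemma coeff_grpSum_mul_grpSum [DecidableEq κ] (c : G → κ) (a b : κ) (g : G) :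
    (grpSum (c ⁻¹' {a}) * grpSum (c ⁻¹' {b})).coeff g = colorCount c a b g := by
  classical
  have h : grpSum (c ⁻¹' {a}) * grpSum (c ⁻¹' {b}) =
      ∑ x : G, MonoidAlgebra.single x ((grpSum (c ⁻¹' {a})).coeff x) * grpSum (c ⁻¹' {b}) := by
    rw [← Finset.sum_mul]
    congr 1
    ext x
    simp [MonoidAlgebra.coeff_sum]
  rw [h, MonoidAlgebra.coeff_sum, Finsupp.finsetSum_apply, colorCount]
  push_cast
  refine Finset.sum_congr rfl fun x _ => ?_
  rw [MonoidAlgebra.coeff_single_mul_apply, coeff_grpSum, coeff_grpSum]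
  by_cases hx : c x = a <;> by_cases hy : c (x⁻¹ * g) = b <;> simp [hx, hy]

/-- A coloring of a group whose color classes are the basic sets of an S-ring. -/
structure IsSchurColoring [DecidableEq κ] (c : G → κ) : Prop where
  eq_one : ∀ g, c g = c 1 → g = 1
  inv : ∀ g h, c g = c h → c g⁻¹ = c h⁻¹
  count : ∀ x y g h, c g = c h → colorCount c (c x) (c y) g = colorCount c (c x) (c y) h

/-- The S-ring whose basic sets are the classes of a Schur coloring. -/
def ofColoring [DecidableEq κ] (c : G → κ) (hc : IsSchurColoring c) : SchurRing G where
  basicSets := Set.range fun g => c ⁻¹' {c g}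
  nonempty_mem := by
    rintro _ ⟨g, rfl⟩
    exact ⟨g, rfl⟩
  cover g := ⟨_, ⟨g, rfl⟩, rfl⟩
  disjoint' := by
    rintro _ ⟨g, rfl⟩ _ ⟨h, rfl⟩ hne
    ext x
    simp only [Set.mem_inter_iff, Set.mem_preimage, Set.mem_singleton_iff,
      Set.mem_empty_iff_false, iff_false, not_and]
    intro h₁ h₂
    exact hne (by simp only [← h₁, ← h₂])
  one_mem := by
    refine ⟨1, Set.ext fun g => ⟨fun h => hc.eq_one g h, ?_⟩⟩
    rintro rfl
    rfl
  inv_mem := by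
    rintro _ ⟨g, rfl⟩
    refine ⟨g⁻¹, Set.ext fun h => ⟨fun hh => ?_, fun hh => ?_⟩⟩
    · simpa using hc.inv _ _ hh
    · simpa using hc.inv _ _ hh
  mul_mem := by
    classical
    rintro _ ⟨x, rfl⟩ _ ⟨y, rfl⟩
    set f := grpSum (c ⁻¹' {c x}) * grpSum (c ⁻¹' {c y}) with hf
    have hconst (g h : G) (hgh : c g = c h) : f.coeff g = f.coeff h := by
      rw [hf, coeff_grpSum_mul_grpSum, coeff_grpSum_mul_grpSum, hc.count x y g h hgh]
    have hsum : f = ∑ k ∈ Finset.univ.image c,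
        f.coeff (Function.invFun c k) • grpSum (c ⁻¹' {k}) := by
      ext g
      rw [MonoidAlgebra.coeff_sum, Finsupp.finsetSum_apply, Finset.sum_eq_single (c g)]
      · rw [MonoidAlgebra.coeff_smul_apply, coeff_grpSum,
          hconst _ g (Function.invFun_eq ⟨g, rfl⟩)]
        simp
      · intro k _ hk
        rw [MonoidAlgebra.coeff_smul_apply, coeff_grpSum]
        simp [Ne.symm hk]
      · simp
    rw [hsum]
    refine Submodule.sum_mem _ fun k hk => Submodule.smul_mem _ _ (Submodule.subset_span ?_)
    obtain ⟨g, -, rfl⟩ := Finset.mem_image.mp hk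
    exact ⟨_, ⟨g, rfl⟩, rfl⟩

lemma isSchurColoring_of_basicSets [DecidableEq κ] (A : SchurRing G) (c : G → κ)
    (hA : A.basicSets = Set.range fun g => c ⁻¹' {c g}) : IsSchurColoring c where
  eq_one g hg := by
    obtain ⟨h, hh : c ⁻¹' {c h} = {1}⟩ := hA ▸ A.one_mem
    have h1 : (1 : G) ∈ c ⁻¹' {c h} := by rw [hh]; rfl
    have : g ∈ c ⁻¹' {c h} := hg.trans h1
    rwa [hh] at this
  inv g h hgh := by
    obtain ⟨k, hk : c ⁻¹' {c k} = (c ⁻¹' {c g})⁻¹⟩ :=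
      hA ▸ A.inv_mem (c ⁻¹' {c g}) (hA ▸ ⟨g, rfl⟩)
    have h1 : g⁻¹ ∈ c ⁻¹' {c k} := by rw [hk]; simp
    have h2 : h⁻¹ ∈ c ⁻¹' {c k} := by rw [hk]; simp [hgh]
    exact h1.trans h2.symm
  count x y g h hgh := by
    have hspan : ∀ f ∈ Submodule.span ℤ (grpSum '' A.basicSets), f.coeff g = f.coeff h := by
      intro f hf
      induction hf using Submodule.span_induction with
      | mem f hf =>
        obtain ⟨X, hX, rfl⟩ := hf
        rw [hA] at hX
        obtain ⟨k, rfl⟩ := hX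
        rw [coeff_grpSum, coeff_grpSum]
        by_cases hk : c h = c k <;> simp [hk, hgh]
      | zero => rfl
      | add f₁ f₂ _ _ h₁ h₂ => simp [h₁, h₂]
      | smul n f _ hf => rw [MonoidAlgebra.coeff_smul_apply, MonoidAlgebra.coeff_smul_apply, hf]
    have := hspan _ (A.mul_mem (c ⁻¹' {c x}) (hA ▸ ⟨x, rfl⟩) (c ⁻¹' {c y}) (hA ▸ ⟨y, rfl⟩))
    rw [coeff_grpSum_mul_grpSum, coeff_grpSum_mul_grpSum] at this
    exact_mod_cast this

/-- The basic sets of an S-ring are the fibers of a retraction sending every element to an element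
of its basic set that minimizes a given function `e`. -/
lemma exists_coloring (A : SchurRing G) (e : G → ℕ) :
    ∃ r : G → G, (∀ g, e (r g) ≤ e g) ∧ (∀ g, r (r g) = r g) ∧
      A.basicSets = Set.range fun g => r ⁻¹' {r g} := by
  classical
  choose B hB hmem using A.cover
  have hBeq (X) (hX : X ∈ A.basicSets) (g) (hg : g ∈ X) : B g = X := by
    by_contra hne
    have := A.disjoint' _ (hB g) X hX hne
    exact (this ▸ (⟨hmem g, hg⟩ : g ∈ B g ∩ X) : g ∈ (∅ : Set G))
  have hmin (X : Set G) : ∃ m, X.Nonempty → m ∈ X ∧ ∀ g ∈ X, e m ≤ e g := by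
    by_cases hX : X.Nonempty
    · obtain ⟨m, hm, hle⟩ := Set.exists_min_image X e (Set.toFinite X) hX
      exact ⟨m, fun _ => ⟨hm, hle⟩⟩
    · exact ⟨1, fun h => absurd h hX⟩
  choose m hm using hmin
  have hm' (g : G) := hm (B g) ⟨g, hmem g⟩
  have hBm (g : G) : B (m (B g)) = B g := hBeq _ (hB g) _ (hm' g).1
  have hiff (g h : G) : m (B h) = m (B g) ↔ h ∈ B g := by
    constructor
    · intro hh
      have : B h = B g := by rw [← hBm h, hh, hBm g]
      exact this ▸ hmem h
    · intro hh
      rw [hBeq _ (hB g) h hh]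
  refine ⟨fun g => m (B g), fun g => (hm' g).2 g (hmem g), fun g => by simp only [hBm], ?_⟩
  have hpre (g : G) : (fun g => m (B g)) ⁻¹' {m (B g)} = B g :=
    Set.ext fun h => hiff g h
  ext X
  constructor
  · intro hX
    obtain ⟨g, hg⟩ := A.nonempty_mem X hX
    exact ⟨g, (hpre g).trans (hBeq X hX g hg)⟩
  · rintro ⟨g, rfl⟩
    exact (congrArg (· ∈ A.basicSets) (hpre g)).mpr (hB g)

lemma isCayleyIso_iff {κ' : Type*} {A A' : SchurRing G} {c : G → κ} {c' : G → κ'}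
    (hA : A.basicSets = Set.range fun g => c ⁻¹' {c g})
    (hA' : A'.basicSets = Set.range fun g => c' ⁻¹' {c' g}) (f : G ≃* G) :
    IsCayleyIso A A' f ↔ ∀ x y, c x = c y ↔ c' (f x) = c' (f y) := by
  constructor
  · intro h x y
    have hx : f '' (c ⁻¹' {c y}) ∈ A'.basicSets := h ▸ ⟨_, hA ▸ ⟨y, rfl⟩, rfl⟩
    rw [hA'] at hx
    obtain ⟨z, hz⟩ := hx
    have key (w : G) : c w = c y ↔ c' (f w) = c' z := by
      have := Set.ext_iff.mp hz (f w)
      simpa using this.symm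
    rw [key x, (key y).mp rfl]
  · intro h
    have himage (y : G) : f '' (c ⁻¹' {c y}) = c' ⁻¹' {c' (f y)} := by
      ext w
      obtain ⟨w, rfl⟩ := f.surjective w
      simpa using h w y
    rw [IsCayleyIso, hA, hA', ← Set.range_comp]
    ext X
    constructor
    · rintro ⟨y, rfl⟩
      exact ⟨f y, (himage y).symm⟩
    · rintro ⟨w, rfl⟩
      obtain ⟨y, rfl⟩ := f.surjective w
      exact ⟨y, himage y⟩

end Coloring

section ENine

local notation "E₉" => Multiplicative (ZMod 3 × ZMod 3)

/-- The `i`-th decimal digit of `L`. -/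
def digit (L i : ℕ) : ℕ := Nat.mod (Nat.div L (Nat.pow 10 i)) 10

/-- Whether `p` holds for all natural numbers below nine. -/
def allNine (p : ℕ → Bool) : Bool :=
  p 8 && (p 7 && (p 6 && (p 5 && (p 4 && (p 3 && (p 2 && (p 1 && p 0)))))))

/-- Whether `p` holds for some natural number below nine. -/
def anyNine (p : ℕ → Bool) : Bool :=
  p 0 || (p 1 || (p 2 || (p 3 || (p 4 || (p 5 || (p 6 || (p 7 || p 8)))))))

/-- The number of natural numbers below nine satisfying `p`. -/
def countNine (p : ℕ → Bool) : ℕ :=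
  Nat.add (p 0).toNat (Nat.add (p 1).toNat (Nat.add (p 2).toNat (Nat.add (p 3).toNat
    (Nat.add (p 4).toNat (Nat.add (p 5).toNat (Nat.add (p 6).toNat (Nat.add (p 7).toNat
      (p 8).toNat)))))))

/-- The numbering of the elements of `E₉` in which every odd number is followed by the number of
the inverse element. -/
def index (g : E₉) : ℕ := digit 684753210 (3 * g.toAdd.1.val + g.toAdd.2.val)

/-- The element of `E₉` with a given number. -/
def ofIndex (n : ℕ) : E₉ := .ofAdd ((digit 212121000 n : ℕ), (digit 122100210 n : ℕ))

/-- Subtraction in `E₉` in terms of numbers. -/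
def subIndex (g x : ℕ) : ℕ :=
  digit 72315648804162357130527486426081735251703864618240573543876012367458201785634120
    (Nat.add (Nat.mul 9 g) x)

/-- Scalar multiplication by an element of `ZMod 3` in terms of numbers. -/
def smulIndex (k u : ℕ) : ℕ := digit 785634120876543210000000000 (Nat.add (Nat.mul 9 k) u)

/-- The linear map sending the standard generators to the elements with numbers `u`, `v`, in terms
of numbers. -/
def actIndex (u v x : ℕ) : ℕ :=
  subIndex (smulIndex (digit 212121000 x) u) (smulIndex (digit 122100210 x) (subIndex 0 v))

lemma index_lt : ∀ g : E₉, index g < 9 := by decide +kernel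

lemma ofIndex_index : ∀ g : E₉, ofIndex (index g) = g := by decide +kernel

lemma index_ofIndex : ∀ n < 9, index (ofIndex n) = n := by decide +kernel

lemma index_injective : Function.Injective index :=
  Function.LeftInverse.injective ofIndex_index

lemma index_inv_mul : ∀ x g : E₉, index (x⁻¹ * g) = subIndex (index g) (index x) := by
  decide +kernel

lemma index_inv : ∀ x : E₉, index x⁻¹ = subIndex 0 (index x) := by decide +kernel

lemma index_one : index 1 = 0 := by decide +kernel

lemma subIndex_zero_lt : ∀ n ≤ 9, n % 2 = 1 → ∀ x < n, subIndex 0 x < n := by decide +kernel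

lemma index_smul_add_smul : ∀ u v g : ZMod 3 × ZMod 3,
    index (.ofAdd (g.1 • u + g.2 • v)) =
      actIndex (index (.ofAdd u)) (index (.ofAdd v)) (index (.ofAdd g)) := by
  decide +kernel

/-- The endomorphism of `E₉` sending the standard generators to `u` and `v`. -/
def homOfImages (u v : E₉) : E₉ →* E₉ where
  toFun g := .ofAdd (g.toAdd.1 • u.toAdd + g.toAdd.2 • v.toAdd)
  map_one' := by simp
  map_mul' g h := by
    rw [← ofAdd_add]
    congr 1
    simp only [toAdd_mul, Prod.fst_add, Prod.snd_add, add_smul]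
    abel

lemma index_homOfImages (u v g : E₉) :
    index (homOfImages u v g) = actIndex (index u) (index v) (index g) :=
  index_smul_add_smul u.toAdd v.toAdd g.toAdd

lemma eq_homOfImages (f : E₉ →* E₉) :
    f = homOfImages (f (.ofAdd (1, 0))) (f (.ofAdd (0, 1))) := by
  refine MonoidHom.ext fun g => ?_
  let φ := AddMonoidHom.toZModLinearMap 3 (AddMonoidHom.toMultiplicative.symm f)
  have hg : g.toAdd = g.toAdd.1 • (1, 0) + g.toAdd.2 • (0, 1) := by simp
  have h : φ g.toAdd = g.toAdd.1 • φ (1, 0) + g.toAdd.2 • φ (0, 1) := by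
    rw [← map_smul, ← map_smul, ← map_add, ← hg]
  exact h

/-- The coefficient `colorCount` for a coloring of `E₉` given by its code. -/
def countIndex (L a b g : ℕ) : ℕ :=
  countNine fun x => Nat.beq (digit L x) a && Nat.beq (digit L (subIndex g x)) b

/-- Whether the classes among the first `n` elements are permuted by inversion, for a coloring
that labels classes by elements. -/
def invCheck (L n : ℕ) : Bool :=
  allNine fun x => Nat.ble n x ||
    Nat.beq (digit L (subIndex 0 x)) (digit L (subIndex 0 (digit L x)))

/-- The codes of the colorings of `{0, …, n - 1}` that label every class by its least element, have
`{0}` as a class, and satisfy `invCheck` on all initial segments of odd length. -/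
def colorings : ℕ → List ℕ
  | 0 => [0]
  | n + 1 => (colorings n).flatMap fun L =>
      (((List.range (n + 1)).filter fun k =>
          Nat.beq k n || (Nat.blt 0 k && Nat.beq (digit L k) k)).map
        fun k => Nat.add (Nat.mul k (Nat.pow 10 n)) L).filter
          fun L' => Nat.beq (Nat.mod n 2) 1 || invCheck L' (n + 1)

/-- Whether the products of color classes are constant on color classes, for a coloring that labels
classes by elements. -/
def countCheck (L : ℕ) : Bool :=
  allNine fun x => allNine fun y => !Nat.beq (digit L x) x || !Nat.beq (digit L y) y ||
    allNine fun g => Nat.beq (digit L g) g ||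
      Nat.beq (countIndex L x y g) (countIndex L x y (digit L g))

/-- Whether the linear map with parameters `u`, `v` carries one coloring to another. -/
def agreeCheck (L L' u v : ℕ) : Bool :=
  allNine fun x => allNine fun y =>
    (Nat.beq (digit L x) (digit L y)) ==
      (Nat.beq (digit L' (actIndex u v x)) (digit L' (actIndex u v y)))

/-- Codes of representatives of the S-rings over `E₉`. -/
def representative : Fin 10 → ℕ :=
  ![111111110, 771111110, 871111110, 555511110, 775511110, 775533110, 434343110,
    874343110, 871221210, 876543210]

lemma allNine_iff {p : ℕ → Bool} : allNine p = true ↔ ∀ n < 9, p n = true := by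
  simp only [allNine, Bool.and_eq_true]
  constructor
  · rintro ⟨h8, h7, h6, h5, h4, h3, h2, h1, h0⟩ n hn
    interval_cases n <;> assumption
  · intro h
    refine ⟨?_, ?_, ?_, ?_, ?_, ?_, ?_, ?_, ?_⟩ <;> exact h _ (by norm_num)

lemma anyNine_iff {p : ℕ → Bool} : anyNine p = true ↔ ∃ n < 9, p n = true := by
  rw [← not_iff_not, Bool.not_eq_true]
  have : anyNine p = false ↔ allNine (fun n => !p n) = true := by
    simp only [anyNine, allNine, Bool.or_eq_false_iff, Bool.and_eq_true, Bool.not_eq_true']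
    tauto
  simp [this, allNine_iff]

lemma countNine_eq_sum (p : ℕ → Bool) :
    countNine p = ∑ n ∈ Finset.range 9, if p n = true then 1 else 0 := by
  have h (b : Bool) : b.toNat = if b = true then 1 else 0 := by cases b <;> rfl
  simp only [countNine, Finset.sum_range_succ, Finset.sum_range_zero, h, Nat.add_eq]
  ring

lemma colorCount_eq_countIndex (L a b : ℕ) (g : E₉) :
    colorCount (fun g : E₉ => digit L (index g)) a b g = countIndex L a b (index g) := by
  have h (F : ℕ → ℕ) : ∑ x : E₉, F (index x) = ∑ n ∈ Finset.range 9, F n :=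
    Finset.sum_bij' (fun x _ => index x) (fun n _ => ofIndex n)
      (fun x _ => Finset.mem_range.mpr (index_lt x)) (fun _ _ => Finset.mem_univ _)
      (fun x _ => ofIndex_index x) (fun n hn => index_ofIndex n (Finset.mem_range.mp hn))
      (fun _ _ => rfl)
  simp only [colorCount, index_inv_mul, countIndex, countNine_eq_sum, Bool.and_eq_true,
    Nat.beq_eq]
  exact h fun n => if digit L n = a ∧ digit L (subIndex (index g) n) = b then 1 else 0

lemma beq_beq_iff {a b c d : ℕ} :
    (Nat.beq a b == Nat.beq c d) = true ↔ (a = b ↔ c = d) := by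
  rw [beq_iff_eq, Bool.eq_iff_iff, Nat.beq_eq, Nat.beq_eq]

/-- Whether a coloring labels every class by an element of it and has `{0}` as a class. -/
def labelCheck (L : ℕ) : Bool :=
  allNine fun x => Nat.blt (digit L x) 9 && Nat.beq (digit L (digit L x)) (digit L x) &&
    Nat.beq (digit L x) 0 == Nat.beq x 0

lemma labelCheck_iff {L : ℕ} : labelCheck L = true ↔
    ∀ x < 9, digit L x < 9 ∧ digit L (digit L x) = digit L x ∧ (digit L x = 0 ↔ x = 0) := by
  simp only [labelCheck, allNine_iff, Bool.and_eq_true, beq_beq_iff,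
    Nat.beq_eq, Nat.blt_eq, and_assoc]

lemma isSchurColoring_iff {L : ℕ} (hL : labelCheck L = true) :
    (IsSchurColoring fun g : E₉ => digit L (index g)) ↔
      invCheck L 9 = true ∧ countCheck L = true := by
  have hL' := labelCheck_iff.mp hL
  have hinv : invCheck L 9 = true ↔
      ∀ x < 9, digit L (subIndex 0 x) = digit L (subIndex 0 (digit L x)) := by
    simp only [invCheck, allNine_iff, Bool.or_eq_true, Nat.beq_eq, Nat.ble_eq]
    exact forall₂_congr fun x hx => by simp [hx]
  have hcount : countCheck L = true ↔ ∀ x < 9, ∀ y < 9, digit L x = x → digit L y = y →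
      ∀ g < 9, countIndex L x y g = countIndex L x y (digit L g) := by
    simp only [countCheck, allNine_iff, Bool.or_eq_true, Bool.not_eq_true', Nat.beq_eq,
      ← Bool.not_eq_true]
    refine forall₂_congr fun x _ => forall₂_congr fun y _ => ?_
    constructor
    · intro h hx hy g hg
      rcases h with (h | h) | h
      · exact absurd hx h
      · exact absurd hy h
      · rcases h g hg with h | h
        · rw [h]
        · exact h
    · intro h
      by_cases hx : digit L x = x
      · by_cases hy : digit L y = y
        · exact .inr fun g hg => .inr (h hx hy g hg)
        · exact .inl (.inr hy)
      · exact .inl (.inl hx)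
  rw [hinv, hcount]
  constructor
  · intro h
    refine ⟨fun x hx => ?_, fun x hx y hy hx' hy' g hg => ?_⟩
    · have := h.inv (ofIndex x) (ofIndex (digit L x))
      simp only [index_inv, index_ofIndex x hx, index_ofIndex _ (hL' x hx).1] at this
      exact this (hL' x hx).2.1.symm
    · have := h.count (ofIndex x) (ofIndex y) (ofIndex g) (ofIndex (digit L g))
      simp only [colorCount_eq_countIndex, index_ofIndex x hx, index_ofIndex y hy,
        index_ofIndex g hg, index_ofIndex _ (hL' g hg).1, hx', hy'] at this
      exact this (hL' g hg).2.1.symm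
  · rintro ⟨h₁, h₂⟩
    refine ⟨fun g hg => ?_, fun g h hgh => ?_, fun x y g h hgh => ?_⟩
    · have h0 : digit L 0 = 0 := (hL' 0 (by norm_num)).2.2.mpr rfl
      apply index_injective
      rw [index_one] at hg ⊢
      exact (hL' _ (index_lt g)).2.2.mp (hg.trans h0)
    · simp only [index_inv]
      rw [h₁ _ (index_lt g), h₁ _ (index_lt h), hgh]
    · have hx := hL' _ (index_lt x)
      have hy := hL' _ (index_lt y)
      simp only [colorCount_eq_countIndex]
      rw [h₂ _ hx.1 _ hy.1 hx.2.1 hy.2.1 _ (index_lt g),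
        h₂ _ hx.1 _ hy.1 hx.2.1 hy.2.1 _ (index_lt h), hgh]

lemma agreeCheck_iff {L L' : ℕ} (u v : E₉) :
    agreeCheck L L' (index u) (index v) = true ↔ ∀ x y : E₉,
      digit L (index x) = digit L (index y) ↔
        digit L' (index (homOfImages u v x)) = digit L' (index (homOfImages u v y)) := by
  simp only [agreeCheck, allNine_iff, beq_beq_iff, index_homOfImages]
  constructor
  · exact fun h x y => h _ (index_lt x) _ (index_lt y)
  · intro h x hx y hy
    have := h (ofIndex x) (ofIndex y)
    rwa [index_ofIndex x hx, index_ofIndex y hy] at this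

lemma isSchurColoring_representative (i : Fin 10) :
    IsSchurColoring fun g : E₉ => digit (representative i) (index g) := by
  have h : ∀ i, labelCheck (representative i) = true ∧ invCheck (representative i) 9 = true ∧
      countCheck (representative i) = true := by
    decide +kernel
  exact (isSchurColoring_iff (h i).1).mpr (h i).2

set_option maxHeartbeats 4000000 in
lemma agreeCheck_representative : ∀ i j, i ≠ j → (anyNine fun u => anyNine fun v =>
    agreeCheck (representative i) (representative j) u v) = false := by
  decide +kernel

set_option maxHeartbeats 4000000 in
lemma exists_agreeCheck : ∀ L ∈ colorings 9, countCheck L = true →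
    ∃ i, (anyNine fun u => anyNine fun v => agreeCheck L (representative i) u v) = true := by
  decide +kernel

/-- The number whose first `n` decimal digits are given by `t`. -/
def code (t : ℕ → ℕ) : ℕ → ℕ
  | 0 => 0
  | n + 1 => t n * 10 ^ n + code t n

lemma code_lt {t : ℕ → ℕ} (ht : ∀ n, t n < 10) (n : ℕ) : code t n < 10 ^ n := by
  induction n with
  | zero => simp [code]
  | succ n ih =>
    have := Nat.mul_le_mul_right (10 ^ n) (Nat.le_of_lt_succ (ht n))
    rw [code, pow_succ]
    omega

lemma digit_code {t : ℕ → ℕ} (ht : ∀ n, t n < 10) {n i : ℕ} (hi : i < n) :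
    digit (code t n) i = t i := by
  change code t n / 10 ^ i % 10 = t i
  induction n with
  | zero => omega
  | succ n ih =>
    rw [code]
    rcases (Nat.lt_succ_iff_lt_or_eq.mp hi) with h | rfl
    · obtain ⟨k, rfl⟩ := Nat.exists_eq_add_of_lt h
      rw [← ih h, show t (i + k + 1) * 10 ^ (i + k + 1) =
        10 ^ i * (t (i + k + 1) * 10 ^ k * 10) by ring, Nat.mul_add_div (by positivity)]
      omega
    · rw [mul_comm, Nat.mul_add_div (by positivity), Nat.div_eq_of_lt (code_lt ht i), add_zero,
        Nat.mod_eq_of_lt (ht i)]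

lemma code_mem_colorings {t : ℕ → ℕ} (ht : ∀ n, t n < 10) (hle : ∀ n < 9, t n ≤ n)
    (hidem : ∀ n < 9, t (t n) = t n) (h0 : ∀ n < 9, t n = 0 → n = 0)
    (hinv : ∀ n < 9, t (subIndex 0 n) = t (subIndex 0 (t n))) {n : ℕ} (hn : n ≤ 9) :
    code t n ∈ colorings n := by
  induction n with
  | zero => simp [colorings, code]
  | succ n ih =>
    simp only [colorings, List.mem_flatMap]
    refine ⟨_, ih (by omega), List.mem_filter.mpr ⟨List.mem_map.mpr ⟨t n, List.mem_filter.mpr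
      ⟨List.mem_range.mpr (Nat.lt_succ_of_le (hle n hn)), ?_⟩, rfl⟩, ?_⟩⟩
    · simp only [Bool.or_eq_true, Bool.and_eq_true, Nat.beq_eq, Nat.blt_eq]
      rcases (hle n hn).eq_or_lt with h | h
      · exact .inl h
      · refine .inr ⟨Nat.pos_of_ne_zero fun h' => ?_, ?_⟩
        · have := h0 n hn h'
          omega
        · rw [digit_code ht h, hidem n hn]
    · change (Nat.beq (n % 2) 1 || invCheck (code t (n + 1)) (n + 1)) = true
      simp only [Bool.or_eq_true, Nat.beq_eq, invCheck, allNine_iff, Nat.ble_eq]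
      rcases Nat.mod_two_eq_zero_or_one n with h | h
      · refine .inr fun x hx => or_iff_not_imp_left.mpr fun hxn => ?_
        rw [not_le] at hxn
        have hlt := subIndex_zero_lt (n + 1) hn (by omega)
        have htx : t x < n + 1 := (hle x hx).trans_lt hxn
        rw [digit_code ht hxn, digit_code ht (hlt _ hxn), digit_code ht (hlt _ htx), hinv x hx]
      · exact .inl h

/-- Every S-ring over `E₉` comes from one of the listed colorings. -/
lemma exists_mem_colorings (A : SchurRing E₉) : ∃ L ∈ colorings 9, countCheck L = true ∧
    A.basicSets = Set.range fun g => (fun h => digit L (index h)) ⁻¹' {digit L (index g)} := by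
  obtain ⟨r, hle, hidem, hA⟩ := A.exists_coloring index
  set t : ℕ → ℕ := fun n => index (r (ofIndex n)) with ht_def
  have ht (n : ℕ) : t n < 10 := (index_lt _).trans (by norm_num)
  have hdigit (g : E₉) : digit (code t 9) (index g) = index (r g) := by
    rw [digit_code ht (index_lt g), ht_def]
    simp only [ofIndex_index]
  have hA' : A.basicSets = Set.range fun g =>
      (fun h => digit (code t 9) (index h)) ⁻¹' {digit (code t 9) (index g)} := by
    rw [hA]
    congr 1
    funext g
    ext h
    simp [hdigit, index_injective.eq_iff]
  have hS := isSchurColoring_of_basicSets A _ hA'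
  have hle' (n) (hn : n < 9) : t n ≤ n := (hle _).trans_eq (index_ofIndex n hn)
  have hidem' (n : ℕ) : t (t n) = t n := by simp only [ht_def, ofIndex_index, hidem]
  have h0 (n) (hn : n < 9) (h : t n = 0) : n = 0 := by
    have h1 := hS.eq_one (ofIndex n)
    simp only [hdigit] at h1
    have h2 : index (r 1) = 0 := Nat.le_zero.mp ((hle 1).trans_eq index_one)
    rw [← index_ofIndex n hn, h1 (h.trans h2.symm), index_one]
  have hL : labelCheck (code t 9) = true := labelCheck_iff.mpr fun x hx => by
    rw [digit_code ht hx, digit_code ht (index_lt _)]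
    exact ⟨index_lt _, hidem' x, h0 x hx, fun h => Nat.le_zero.mp ((hle' x hx).trans_eq h)⟩
  obtain ⟨hinv, hcount⟩ := (isSchurColoring_iff hL).mp hS
  refine ⟨_, code_mem_colorings ht hle' (fun n _ => hidem' n) h0 (fun n hn => ?_) le_rfl,
    hcount, hA'⟩
  have := hS.inv (ofIndex n) (ofIndex (t n))
  simp only [index_inv, index_ofIndex n hn, index_ofIndex (t n) (index_lt _)] at this
  have hlt := subIndex_zero_lt 9 le_rfl rfl
  rw [digit_code ht hn, digit_code ht (index_lt _), digit_code ht (hlt _ hn),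
    digit_code ht (hlt _ (index_lt _))] at this
  exact this (hidem' n).symm

end ENine

end SchurRing

theorem ten_srings_over_E9 :
    ∃ R : Fin 10 → SchurRing (Multiplicative (ZMod 3 × ZMod 3)),
      (∀ A : SchurRing (Multiplicative (ZMod 3 × ZMod 3)),
        ∃ (i : Fin 10) (f : Multiplicative (ZMod 3 × ZMod 3) ≃* Multiplicative (ZMod 3 × ZMod 3)),
          IsCayleyIso A (R i) f) ∧
      (∀ i j : Fin 10, i ≠ j →
        ¬ ∃ f : Multiplicative (ZMod 3 × ZMod 3) ≃* Multiplicative (ZMod 3 × ZMod 3),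
            IsCayleyIso (R i) (R j) f) := by
  refine ⟨fun i => .ofColoring _ (SchurRing.isSchurColoring_representative i), fun A => ?_, ?_⟩
  · obtain ⟨L, hL, hcount, hA⟩ := SchurRing.exists_mem_colorings A
    obtain ⟨i, hi⟩ := SchurRing.exists_agreeCheck L hL hcount
    obtain ⟨u, hu, hi⟩ := SchurRing.anyNine_iff.mp hi
    obtain ⟨v, hv, hi⟩ := SchurRing.anyNine_iff.mp hi
    rw [← SchurRing.index_ofIndex u hu, ← SchurRing.index_ofIndex v hv,
      SchurRing.agreeCheck_iff] at hi
    set φ := SchurRing.homOfImages (SchurRing.ofIndex u) (SchurRing.ofIndex v)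
    have hφ : Function.Injective φ := (injective_iff_map_eq_one φ).mpr fun g hg =>
      (SchurRing.isSchurColoring_of_basicSets A _ hA).eq_one g
        ((hi g 1).mpr (by rw [hg, map_one]))
    exact ⟨i, MulEquiv.ofBijective φ (Finite.injective_iff_bijective.mp hφ),
      (SchurRing.isCayleyIso_iff hA rfl _).mpr hi⟩
  · rintro i j hij ⟨f, hf⟩
    have h := (SchurRing.isCayleyIso_iff rfl rfl f).mp hf
    change ∀ x y, _ ↔ SchurRing.digit _ (SchurRing.index (f.toMonoidHom x)) =
      SchurRing.digit _ (SchurRing.index (f.toMonoidHom y)) at h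
    rw [SchurRing.eq_homOfImages f.toMonoidHom] at h
    have hagree := (SchurRing.agreeCheck_iff _ _).mpr h
    refine Bool.false_ne_true ((SchurRing.agreeCheck_representative i j hij).symm.trans ?_)
    exact SchurRing.anyNine_iff.mpr ⟨_, SchurRing.index_lt _,
      SchurRing.anyNine_iff.mpr ⟨_, SchurRing.index_lt _, hagree⟩⟩
end
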